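/- arXiv:2305.17014 — 3 statements merged into one kernel-verified Lean document; each statement's English description precedes it below -/
import Mathlib

section
/- For every prime power q ≥ 3 there exists a bipartite egr(2q²−2, q, 6, (q−1)(q²−3q+3)) graph, and moreover every bipartite egr(n, q, 6, (q−1)(q²−3q+3)) graph satisfies n ≥ 2q²−2; that is, the incidence graph of a biaffine plane of order q of type 2 is an extremal bipartite edge-girth-regular graph with these parameters. -/
/-!
Let `G` be bipartite, `k`-regular and of girth at least 6, and call a vertex far from `u` if it
lies in the colour class of `u` but is neither `u` nor at distance 2 from `u`. As there are no
4-cycles, a hexagon `u v a b c d` is determined by `a` and `c`, so the hexagons through `u v`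
correspond to the pairs of a neighbour `a ≠ u` of `v` and a vertex `c` that is not adjacent to `v`
and lies at distance 2 from both `a` and `u`. There are `(k - 1) ^ 3` pairs `(a, c)` in which `c`
need not be at distance 2 from `u`, and the ones to be discarded are those with `c` far from `u`.
Hence an edge `u v` lies on at least `(k - 1) ^ 3 - (k - 1) f` hexagons, where `f` is the number
of vertices far from `u`. Since the colour class of `u` has `1 + k (k - 1) + f` vertices, a
prescribed number of hexagons per edge bounds the order of `G` from below.

Equality holds as soon as every vertex far from `u` is at distance 2 from every vertex at distance
2 from `u`, i.e. if "being equal or far" is transitive. In a biaffine plane of type 2 obtained by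
deleting `(P, ℓ)`, two points are far if and only if they are distinct and collinear with `P`, and
dually for lines, so the relation is transitive there.
-/

open SimpleGraph

/-- `G` is an edge-girth-regular graph with parameters `(n, k, g, lam)`:
a finite simple graph on `n` vertices, `k`-regular, of girth `g`, in which every
edge lies on exactly `lam` cycles of length `g` (each such cycle corresponds to
exactly two closed walks based at an endpoint of the edge and traversing it). -/
def SimpleGraph.IsEGR {V : Type*} (G : SimpleGraph V) (n k g lam : ℕ) : Prop :=
  Finite V ∧ Nat.card V = n ∧
    (∀ v : V, (G.neighborSet v).ncard = k) ∧
    G.egirth = (g : ℕ∞) ∧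
    ∀ u v : V, G.Adj u v →
      Nat.card {p : G.Walk u u // p.IsCycle ∧ p.length = g ∧ s(u, v) ∈ p.edges} = 2 * lam

/-- The number of closed walks of length `l` based at `v`. -/
noncomputable def SimpleGraph.closedWalkCount {V : Type*} (G : SimpleGraph V) (v : V) (l : ℕ) : ℕ :=
  Nat.card {p : G.Walk v v // p.length = l}

/-- The number of cycle-free closed walks of length `l` based at `v`,
i.e. closed walks whose traversed edges form an acyclic subgraph. -/
noncomputable def SimpleGraph.cycleFreeClosedWalkCount {V : Type*} (G : SimpleGraph V) (v : V)
    (l : ℕ) : ℕ :=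
  Nat.card {p : G.Walk v v // p.length = l ∧ p.toSubgraph.coe.IsAcyclic}

section FourCycles

variable {V : Type*} {G : SimpleGraph V}

/-- The absence of 4-cycles, stated as: two distinct vertices have at most one common neighbour. -/
def C4Free (G : SimpleGraph V) : Prop :=
  ∀ ⦃x y : V⦄, x ≠ y → (G.commonNeighbors x y).Subsingleton

lemma C4Free.eq_of_adj {x y a b : V} (hG : C4Free G) (hxy : x ≠ y) (hxa : G.Adj x a)
    (hay : G.Adj a y) (hxb : G.Adj x b) (hby : G.Adj b y) : a = b :=
  hG hxy ⟨hxa, hay.symm⟩ ⟨hxb, hby.symm⟩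

lemma C4Free.of_four_lt_egirth (hG : 4 < G.egirth) : C4Free G := by
  rintro x y hxy a ⟨hxa : G.Adj x a, hya : G.Adj y a⟩ b ⟨hxb : G.Adj x b, hyb : G.Adj y b⟩
  by_contra hab
  have hcycle : (Walk.cons hxa (.cons hya.symm (.cons hyb (.cons hxb.symm .nil)))).IsCycle := by
    have := hxa.ne
    have := hxb.ne
    have := hya.ne
    have := hyb.ne
    simp only [Walk.cons_isCycle_iff, Walk.isPath_def, Walk.support_cons, Walk.support_nil,
      Walk.edges_cons, Walk.edges_nil, List.nodup_cons, List.mem_cons, Sym2.eq_iff]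
    grind
  exact hG.not_ge (egirth_le_length hcycle)

lemma C4Free.length_ne_four (hG : C4Free G) {u : V} {p : G.Walk u u} (hp : p.IsCycle) :
    p.length ≠ 4 := by
  intro hl
  match p, hl with
  | .cons (v := a) hua (.cons (v := w) haw (.cons (v := b) hwb (.cons hbu .nil))), _ =>
    have hnodup := hp.support_nodup
    simp only [Walk.support_cons, Walk.support_nil, List.tail_cons, List.nodup_cons,
      List.mem_cons] at hnodup
    have hab : a = b := hG.eq_of_adj (by grind) hua haw hbu.symm hwb.symm
    grind

lemma six_le_egirth_iff_c4Free (hG : G.Colorable 2) : 6 ≤ G.egirth ↔ C4Free G := by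
  refine ⟨fun h => .of_four_lt_egirth (lt_of_lt_of_le (by norm_num) h), fun h => ?_⟩
  refine (le_egirth (n := 6)).2 fun u p hp => ?_
  have hthree := hp.three_le_length
  have hfour := h.length_ne_four hp
  obtain ⟨m, hm⟩ := two_colorable_iff_forall_loop_even.1 hG u p
  exact_mod_cast (by omega : 6 ≤ p.length)

end FourCycles

section Hexagons

variable {V : Type*} {G : SimpleGraph V} {u v a b c d : V}

/-- The vertices `u, v, a, b, c, d` form, in this cyclic order, a 6-cycle. -/
structure IsHexagon (G : SimpleGraph V) (u v a b c d : V) : Prop where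
  adj_uv : G.Adj u v
  adj_va : G.Adj v a
  adj_ab : G.Adj a b
  adj_bc : G.Adj b c
  adj_cd : G.Adj c d
  adj_du : G.Adj d u
  nodup : [u, v, a, b, c, d].Nodup

namespace IsHexagon

lemma symm (h : IsHexagon G u v a b c d) : IsHexagon G u d c b a v :=
  ⟨h.adj_du.symm, h.adj_cd.symm, h.adj_bc.symm, h.adj_ab.symm, h.adj_va.symm, h.adj_uv.symm, by
    have := h.nodup
    grind⟩

/-- The closed walk at `u` once around a hexagon, starting with the edge `u v`. -/
def walk (h : IsHexagon G u v a b c d) : G.Walk u u :=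
  .cons h.adj_uv (.cons h.adj_va (.cons h.adj_ab (.cons h.adj_bc (.cons h.adj_cd
    (.cons h.adj_du .nil)))))

lemma walk_isCycle (h : IsHexagon G u v a b c d) : h.walk.IsCycle := by
  have := h.nodup
  simp only [walk, Walk.cons_isCycle_iff, Walk.isPath_def, Walk.support_cons, Walk.support_nil,
    Walk.edges_cons, Walk.edges_nil, List.nodup_cons, List.mem_cons, Sym2.eq_iff] at this ⊢
  grind

lemma edge_mem_edges_walk (h : IsHexagon G u v a b c d) : s(u, v) ∈ h.walk.edges := by
  simp [walk]

lemma edge_mem_edges_walk_symm (h : IsHexagon G u v a b c d) : s(u, v) ∈ h.symm.walk.edges := by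
  simp [walk]

end IsHexagon

lemma exists_isHexagon_of_isCycle {p : G.Walk u u} (hp : p.IsCycle)
    (hl : p.length = 6) : ∃ v a b c d, ∃ h : IsHexagon G u v a b c d, p = h.walk := by
  match p, hl with
  | .cons (v := v) huv (.cons (v := a) hva (.cons (v := b) hab (.cons (v := c) hbc
      (.cons (v := d) hcd (.cons hdu .nil))))), _ =>
    have hnodup := hp.support_nodup
    refine ⟨v, a, b, c, d, ⟨huv, hva, hab, hbc, hcd, hdu, ?_⟩, rfl⟩
    simp only [Walk.support_cons, Walk.support_nil, List.tail_cons] at hnodup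
    grind

/-- The hexagons `u v a b c d` through the oriented edge `u v`, recorded by their remaining
vertices `(a, b, c, d)`. -/
def hexagonSet (G : SimpleGraph V) (u v : V) : Set (V × V × V × V) :=
  {x | IsHexagon G u v x.1 x.2.1 x.2.2.1 x.2.2.2}

lemma card_isCycle_length_six_eq (G : SimpleGraph V) (u v : V) :
    Nat.card {p : G.Walk u u // p.IsCycle ∧ p.length = 6 ∧ s(u, v) ∈ p.edges} =
      2 * (hexagonSet G u v).ncard := by
  let toWalk : Bool × hexagonSet G u v →
      {p : G.Walk u u // p.IsCycle ∧ p.length = 6 ∧ s(u, v) ∈ p.edges}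
    | (true, x) => ⟨x.2.walk, x.2.walk_isCycle, rfl, x.2.edge_mem_edges_walk⟩
    | (false, x) => ⟨x.2.symm.walk, x.2.symm.walk_isCycle, rfl, x.2.edge_mem_edges_walk_symm⟩
  have hbij : toWalk.Bijective := by
    constructor
    · rintro ⟨i, ⟨a, b, c, d⟩, hx : IsHexagon G u v a b c d⟩
        ⟨j, ⟨a', b', c', d'⟩, hy : IsHexagon G u v a' b' c' d'⟩ hxy
      have hsupp := congrArg (fun p => p.1.support) hxy
      have hx_nodup := hx.nodup
      have hy_nodup := hy.nodup
      cases i <;> cases j <;>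
        simp only [toWalk, IsHexagon.walk, Walk.support_cons, Walk.support_nil] at hsupp <;> grind
    · rintro ⟨p, hp, hl, he⟩
      obtain ⟨w, a, b, c, d, h, rfl⟩ := exists_isHexagon_of_isCycle hp hl
      have hv : v = w ∨ v = d := by
        have := h.nodup
        simp only [IsHexagon.walk, Walk.edges_cons, Walk.edges_nil, List.nodup_cons, List.mem_cons,
          Sym2.eq_iff] at he this
        grind
      rcases hv with rfl | rfl
      · exact ⟨(true, ⟨(a, b, c, d), h⟩), rfl⟩
      · exact ⟨(false, ⟨(c, b, a, w), h.symm⟩), rfl⟩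
  rw [← Nat.card_eq_of_bijective toWalk hbij, Nat.card_prod, Nat.card_eq_fintype_card,
    Fintype.card_bool, Nat.card_coe_set_eq]

end Hexagons

section SecondNeighbors

lemma color_eq_of_adj_of_adj {V : Type*} {G : SimpleGraph V} {u v w : V} (C : G.Coloring Bool)
    (huv : G.Adj u v) (hvw : G.Adj v w) : C u = C w :=
  (Bool.eq_not_of_ne (C.valid huv)).trans (Bool.eq_not_of_ne (C.valid hvw.symm)).symm

variable {V : Type*} [Fintype V] [DecidableEq V] {G : SimpleGraph V} [DecidableRel G.Adj]
  {k : ℕ} {u v a c : V}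

lemma card_neighborFinset_erase (hk : G.IsRegularOfDegree k) (huv : G.Adj u v) :
    ((G.neighborFinset u).erase v).card = k - 1 := by
  rw [Finset.card_erase_of_mem (by simpa using huv), card_neighborFinset_eq_degree, hk u]

/-- The vertices other than `u` that have a common neighbour with `u`. -/
def secondNeighborFinset (G : SimpleGraph V) [DecidableRel G.Adj] (u : V) : Finset V :=
  (G.neighborFinset u).biUnion fun v => (G.neighborFinset v).erase u

lemma mem_secondNeighborFinset :
    c ∈ secondNeighborFinset G u ↔ c ≠ u ∧ ∃ v, G.Adj u v ∧ G.Adj v c := by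
  simp only [secondNeighborFinset, Finset.mem_biUnion, mem_neighborFinset, Finset.mem_erase]
  tauto

lemma C4Free.card_secondNeighborFinset (hG : C4Free G) (hk : G.IsRegularOfDegree k) (u : V) :
    (secondNeighborFinset G u).card = k * (k - 1) := by
  have hdisj : (G.neighborFinset u : Set V).PairwiseDisjoint
      fun v => (G.neighborFinset v).erase u := by
    intro v huv w huw hvw
    refine Finset.disjoint_left.2 fun c hvc hwc => hvw ?_
    simp only [Finset.mem_erase, mem_neighborFinset, Finset.mem_coe] at huv huw hvc hwc
    exact hG.eq_of_adj hvc.1.symm huv hvc.2 huw hwc.2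
  have hcard (v : V) (hv : v ∈ G.neighborFinset u) :
      ((G.neighborFinset v).erase u).card = k - 1 :=
    card_neighborFinset_erase hk ((mem_neighborFinset ..).1 hv).symm
  rw [secondNeighborFinset, Finset.card_biUnion hdisj, Finset.sum_congr rfl hcard,
    Finset.sum_const, card_neighborFinset_eq_degree, hk u, smul_eq_mul]

lemma C4Free.card_secondNeighborFinset_sdiff (hG : C4Free G) (hk : G.IsRegularOfDegree k)
    (hva : G.Adj v a) :
    (secondNeighborFinset G a \ G.neighborFinset v).card = (k - 1) ^ 2 := by
  have hinter : G.neighborFinset v ∩ secondNeighborFinset G a = (G.neighborFinset v).erase a := by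
    ext c
    simp only [Finset.mem_inter, mem_neighborFinset, mem_secondNeighborFinset, Finset.mem_erase]
    exact ⟨fun h => ⟨h.2.1, h.1⟩, fun h => ⟨h.2, h.1, v, hva.symm, h.2⟩⟩
  rw [Finset.card_sdiff, hinter, card_neighborFinset_erase hk hva,
    hG.card_secondNeighborFinset hk, ← Nat.sub_one_mul, sq]

lemma color_eq_of_mem_secondNeighborFinset (C : G.Coloring Bool)
    (hc : c ∈ secondNeighborFinset G u) : C c = C u := by
  obtain ⟨-, v, huv, hvc⟩ := mem_secondNeighborFinset.1 hc
  exact (color_eq_of_adj_of_adj C huv hvc).symm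

/-- The vertices of the colour class of `u` that are neither `u` nor second neighbours of `u`. -/
def farFinset (C : G.Coloring Bool) (u : V) : Finset V :=
  Finset.univ.filter (C · = C u) \ insert u (secondNeighborFinset G u)

lemma mem_farFinset {C : G.Coloring Bool} :
    c ∈ farFinset C u ↔ C c = C u ∧ c ≠ u ∧ c ∉ secondNeighborFinset G u := by
  simp [farFinset]

lemma C4Free.card_farFinset_add (hG : C4Free G) (hk : G.IsRegularOfDegree k)
    (C : G.Coloring Bool) (u : V) :
    (farFinset C u).card + (k * (k - 1) + 1) = (Finset.univ.filter (C · = C u)).card := by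
  have hsub : insert u (secondNeighborFinset G u) ⊆ Finset.univ.filter (C · = C u) := by
    intro c hc
    obtain rfl | hc := Finset.mem_insert.1 hc
    · simp
    · simpa using color_eq_of_mem_secondNeighborFinset C hc
  rw [← hG.card_secondNeighborFinset hk u,
    ← Finset.card_insert_of_notMem (a := u) (by simp [mem_secondNeighborFinset]), farFinset,
    Finset.card_sdiff_add_card_eq_card hsub]

lemma secondNeighborFinset_sdiff_eq (C : G.Coloring Bool) (hvu : G.Adj v u) (hva : G.Adj v a) :
    secondNeighborFinset G a \ G.neighborFinset v =
      (secondNeighborFinset G a ∩ secondNeighborFinset G u) \ G.neighborFinset v ∪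
        secondNeighborFinset G a ∩ farFinset C u := by
  ext c
  have hfar (hc : c ∈ farFinset C u) : ¬ G.Adj v c := fun hvc =>
    have ⟨_, hcu, hnot⟩ := mem_farFinset.1 hc
    hnot (mem_secondNeighborFinset.2 ⟨hcu, v, hvu.symm, hvc⟩)
  have hcolor (hc : c ∈ secondNeighborFinset G a) : C c = C u :=
    (color_eq_of_mem_secondNeighborFinset C hc).trans (color_eq_of_adj_of_adj C hva.symm hvu)
  simp only [mem_farFinset, Finset.mem_sdiff, Finset.mem_union, Finset.mem_inter,
    mem_neighborFinset] at hfar ⊢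
  grind

end SecondNeighbors

section HexagonCount

variable {V : Type*} [Fintype V] [DecidableEq V] {G : SimpleGraph V} [DecidableRel G.Adj]
  {k : ℕ} {u v : V}

lemma C4Free.exists_isHexagon {a c : V} (hG : C4Free G) (C : G.Coloring Bool) (huv : G.Adj u v)
    (hva : G.Adj v a) (hua : u ≠ a) (hac : c ∈ secondNeighborFinset G a)
    (huc : c ∈ secondNeighborFinset G u) (hvc : ¬ G.Adj v c) :
    ∃ b d, IsHexagon G u v a b c d := by
  obtain ⟨hca, b, hab, hbc⟩ := mem_secondNeighborFinset.1 hac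
  obtain ⟨hcu, d, hud, hdc⟩ := mem_secondNeighborFinset.1 huc
  have hvb : v ≠ b := by rintro rfl; exact hvc hbc
  have hvd : v ≠ d := by rintro rfl; exact hvc hdc
  have hbd : b ≠ d := by
    rintro rfl
    exact hvb (hG.eq_of_adj hua huv hva hud hab.symm)
  have hca_color := color_eq_of_mem_secondNeighborFinset C hac
  have hcu_color := color_eq_of_mem_secondNeighborFinset C huc
  have hub : u ≠ b := ne_of_apply_ne C (hcu_color.symm.trans hca_color ▸ C.valid hab)
  have hcv : c ≠ v := ne_of_apply_ne C (hcu_color ▸ C.valid huv)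
  have had : a ≠ d := ne_of_apply_ne C (hca_color.symm.trans hcu_color ▸ C.valid hud)
  exact ⟨b, d, huv, hva, hab, hbc, hdc.symm, hud.symm, by
    simp [huv.ne, hva.ne, hab.ne, hbc.ne, hdc.ne', hud.ne, hua, hub, hvb, hvd, hbd, had, hca.symm,
      hcu.symm, hcv.symm]⟩

lemma C4Free.ncard_hexagonSet (hG : C4Free G) (C : G.Coloring Bool) (huv : G.Adj u v) :
    (hexagonSet G u v).ncard = ∑ a ∈ (G.neighborFinset v).erase u,
      ((secondNeighborFinset G a ∩ secondNeighborFinset G u) \ G.neighborFinset v).card := by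
  let S : Finset (Σ _ : V, V) := ((G.neighborFinset v).erase u).sigma fun a =>
    (secondNeighborFinset G a ∩ secondNeighborFinset G u) \ G.neighborFinset v
  have hbij : Set.BijOn (fun x : V × V × V × V => (⟨x.1, x.2.2.1⟩ : Σ _ : V, V))
      (hexagonSet G u v) S := by
    refine ⟨?_, ?_, ?_⟩
    · rintro ⟨a, b, c, d⟩ (h : IsHexagon G u v a b c d)
      have hnodup := h.nodup
      have hvc : ¬ G.Adj v c := fun hvc => by
        have : v = b := hG.eq_of_adj (by grind) h.adj_va.symm hvc h.adj_ab h.adj_bc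
        grind
      have hac : c ∈ secondNeighborFinset G a :=
        mem_secondNeighborFinset.2 ⟨by grind, b, h.adj_ab, h.adj_bc⟩
      have huc : c ∈ secondNeighborFinset G u :=
        mem_secondNeighborFinset.2 ⟨by grind, d, h.adj_du.symm, h.adj_cd.symm⟩
      have hau : a ≠ u := by grind
      simp [S, h.adj_va, hvc, hac, huc, hau]
    · rintro ⟨a, b, c, d⟩ (h : IsHexagon G u v a b c d) ⟨a', b', c', d'⟩
        (h' : IsHexagon G u v a' b' c' d') heq
      obtain ⟨rfl, rfl⟩ : a = a' ∧ c = c' := by simpa using heq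
      have hnodup := h.nodup
      have hb : b = b' := hG.eq_of_adj (by grind) h.adj_ab h.adj_bc h'.adj_ab h'.adj_bc
      have hd : d = d' := hG.eq_of_adj (by grind) h.adj_cd h.adj_du h'.adj_cd h'.adj_du
      rw [hb, hd]
    · rintro ⟨a, c⟩ hac
      simp only [S, Finset.mem_coe, Finset.mem_sigma, Finset.mem_erase, Finset.mem_sdiff,
        Finset.mem_inter, mem_neighborFinset] at hac
      obtain ⟨⟨hau, hva⟩, ⟨hac, huc⟩, hvc⟩ := hac
      obtain ⟨b, d, h⟩ := hG.exists_isHexagon C huv hva hau.symm hac huc hvc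
      exact ⟨(a, b, c, d), h, rfl⟩
  rw [hbij.ncard_eq, Set.ncard_coe_finset, Finset.card_sigma]

theorem C4Free.ncard_hexagonSet_add_sum (hG : C4Free G) (hk : G.IsRegularOfDegree k)
    (C : G.Coloring Bool) (huv : G.Adj u v) :
    (hexagonSet G u v).ncard + ∑ a ∈ (G.neighborFinset v).erase u,
      (secondNeighborFinset G a ∩ farFinset C u).card = (k - 1) ^ 3 := by
  have hsplit (a : V) (ha : a ∈ (G.neighborFinset v).erase u) :
      ((secondNeighborFinset G a ∩ secondNeighborFinset G u) \ G.neighborFinset v).card +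
        (secondNeighborFinset G a ∩ farFinset C u).card = (k - 1) ^ 2 := by
    have hva : G.Adj v a := by simpa using (Finset.mem_erase.1 ha).2
    rw [← hG.card_secondNeighborFinset_sdiff hk hva, secondNeighborFinset_sdiff_eq C huv.symm hva,
      Finset.card_union_of_disjoint]
    refine Finset.disjoint_left.2 fun c hc hfar => ?_
    simp only [Finset.mem_sdiff, Finset.mem_inter, mem_farFinset] at hc hfar
    exact hfar.2.2.2 hc.1.2
  rw [hG.ncard_hexagonSet C huv, ← Finset.sum_add_distrib, Finset.sum_congr rfl hsplit,
    Finset.sum_const, card_neighborFinset_erase hk huv.symm, smul_eq_mul, ← pow_succ']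

lemma C4Free.pow_three_le_ncard_hexagonSet_add (hG : C4Free G) (hk : G.IsRegularOfDegree k)
    (C : G.Coloring Bool) (huv : G.Adj u v) :
    (k - 1) ^ 3 ≤ (hexagonSet G u v).ncard + (k - 1) * (farFinset C u).card := by
  rw [← hG.ncard_hexagonSet_add_sum hk C huv, ← card_neighborFinset_erase hk huv.symm,
    ← smul_eq_mul (Finset.card _)]
  gcongr
  exact Finset.sum_le_card_nsmul _ _ _ fun a _ => Finset.card_le_card Finset.inter_subset_right

lemma C4Free.ncard_hexagonSet_add_mul (hG : C4Free G) (hk : G.IsRegularOfDegree k)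
    (C : G.Coloring Bool)
    (hfar : ∀ a ∈ secondNeighborFinset G u, farFinset C u ⊆ secondNeighborFinset G a)
    (huv : G.Adj u v) :
    (hexagonSet G u v).ncard + (k - 1) * (farFinset C u).card = (k - 1) ^ 3 := by
  have hinter (a : V) (ha : a ∈ (G.neighborFinset v).erase u) :
      (secondNeighborFinset G a ∩ farFinset C u).card = (farFinset C u).card := by
    obtain ⟨hau, hva⟩ := Finset.mem_erase.1 ha
    rw [Finset.inter_eq_right.2 (hfar a _)]
    exact mem_secondNeighborFinset.2 ⟨hau, v, huv, by simpa using hva⟩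
  rw [← hG.ncard_hexagonSet_add_sum hk C huv, Finset.sum_congr rfl hinter, Finset.sum_const,
    card_neighborFinset_erase hk huv.symm, smul_eq_mul]

end HexagonCount

section EdgeGirthRegular

variable {V : Type*} {G : SimpleGraph V} {n k lam : ℕ}

lemma isRegularOfDegree_of_ncard_neighborSet [G.LocallyFinite]
    (h : ∀ v, (G.neighborSet v).ncard = k) : G.IsRegularOfDegree k := fun v => by
  rw [← card_neighborSet_eq_degree, ← Nat.card_eq_fintype_card, Nat.card_coe_set_eq, h v]

lemma exists_adj_of_egirth_ne_top (hG : G.egirth ≠ ⊤) : ∃ u v, G.Adj u v := by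
  by_contra! h
  refine hG (egirth_eq_top.2 fun u p hp => ?_)
  cases p with
  | nil => exact hp.ne_nil rfl
  | cons huv _ => exact h _ _ huv

lemma card_filter_color_add [Fintype V] (C : G.Coloring Bool) {u v : V} (huv : G.Adj u v) :
    (Finset.univ.filter (C · = C u)).card + (Finset.univ.filter (C · = C v)).card =
      Fintype.card V := by
  have hcolor (c : V) : C c = C v ↔ ¬ C c = C u := by
    rw [Bool.eq_not_of_ne (C.valid huv.symm), Bool.eq_not]
  simp only [hcolor]
  exact Finset.card_filter_add_card_filter_not _

theorem le_of_isEGR_of_colorable_two (hG : G.IsEGR n k 6 lam) (hbip : G.Colorable 2) :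
    2 * (k - 1) ^ 3 + 2 * (k - 1) * (k * (k - 1) + 1) ≤ 2 * lam + (k - 1) * n := by
  classical
  obtain ⟨_, hn, hdeg, hgirth, hcycles⟩ := hG
  have := Fintype.ofFinite V
  have hk := isRegularOfDegree_of_ncard_neighborSet hdeg
  have hC4 : C4Free G := (six_le_egirth_iff_c4Free hbip).1 hgirth.ge
  have C : G.Coloring Bool := hbip.toColoring (by simp)
  have hbound {u v : V} (huv : G.Adj u v) : (k - 1) ^ 3 + (k - 1) * (k * (k - 1) + 1) ≤
      lam + (k - 1) * (Finset.univ.filter (C · = C u)).card := by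
    have hlam : (hexagonSet G u v).ncard = lam := by
      have := card_isCycle_length_six_eq G u v
      have := hcycles u v huv
      omega
    have hfar := hC4.pow_three_le_ncard_hexagonSet_add hk C huv
    rw [hlam] at hfar
    rw [← hC4.card_farFinset_add hk C u, mul_add _ (farFinset C u).card]
    linarith
  obtain ⟨u, v, huv⟩ := exists_adj_of_egirth_ne_top (G := G) (by simp [hgirth])
  calc 2 * (k - 1) ^ 3 + 2 * (k - 1) * (k * (k - 1) + 1)
    _ = ((k - 1) ^ 3 + (k - 1) * (k * (k - 1) + 1)) +
        ((k - 1) ^ 3 + (k - 1) * (k * (k - 1) + 1)) := by ring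
    _ ≤ _ := add_le_add (hbound huv) (hbound huv.symm)
    _ = 2 * lam + (k - 1) * n := by
      rw [← hn, Nat.card_eq_fintype_card, ← card_filter_color_add C huv]
      ring

theorem isEGR_of_farFinset_subset [Fintype V] [DecidableEq V] [DecidableRel G.Adj] [Nonempty V]
    {m : ℕ} (hG : C4Free G) (hk : G.IsRegularOfDegree k) (C : G.Coloring Bool)
    (hfar : ∀ u, ∀ a ∈ secondNeighborFinset G u, farFinset C u ⊆ secondNeighborFinset G a)
    (hm : ∀ u, (farFinset C u).card = m) (hlam0 : lam ≠ 0)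
    (hlam : lam + (k - 1) * m = (k - 1) ^ 3) :
    G.IsEGR (Nat.card V) k 6 lam := by
  have hhex {u v : V} (huv : G.Adj u v) : (hexagonSet G u v).ncard = lam := by
    have := hG.ncard_hexagonSet_add_mul hk C (hfar u) huv
    rw [hm u] at this
    omega
  have hgirth_le : G.egirth ≤ 6 := by
    let u : V := Classical.arbitrary V
    obtain ⟨v, huv⟩ : ∃ v, G.Adj u v := by
      rw [← degree_pos_iff_exists_adj, hk u, Nat.pos_iff_ne_zero]
      rintro rfl
      simp [hlam0] at hlam
    obtain ⟨x, hx : IsHexagon G u v _ _ _ _⟩ : (hexagonSet G u v).Nonempty :=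
      Set.nonempty_of_ncard_ne_zero (by rwa [hhex huv])
    exact egirth_le_length hx.walk_isCycle
  have hbip : G.Colorable 2 := C.colorable
  refine ⟨inferInstance, rfl, fun v => ?_, ?_, fun u v huv => ?_⟩
  · rw [← Nat.card_coe_set_eq, Nat.card_eq_fintype_card, card_neighborSet_eq_degree, hk v]
  · exact hgirth_le.antisymm ((six_le_egirth_iff_c4Free hbip).2 hG)
  · rw [card_isCycle_length_six_eq, hhex huv]

end EdgeGirthRegular

section IncidenceGraph

open Configuration

variable {P L : Type*} [Membership P L] {p u a c : P} {l m : L}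

/-- The incidence graph of a point-line configuration: its vertices are the points and the lines,
and a point is adjacent to the lines containing it. -/
def incidenceGraph (P L : Type*) [Membership P L] : SimpleGraph (P ⊕ L) where
  Adj
    | .inl p, .inr l => p ∈ l
    | .inr l, .inl p => p ∈ l
    | _, _ => False
  symm := ⟨by rintro (p | l) (q | m) h <;> exact h⟩
  loopless := ⟨by rintro (p | l) h <;> exact h⟩

@[simp] lemma incidenceGraph_adj_inl_inr : (incidenceGraph P L).Adj (.inl p) (.inr l) ↔ p ∈ l :=
  Iff.rfl

@[simp] lemma incidenceGraph_adj_inr_inl : (incidenceGraph P L).Adj (.inr l) (.inl p) ↔ p ∈ l :=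
  Iff.rfl

@[simp] lemma not_incidenceGraph_adj_inl_inl : ¬ (incidenceGraph P L).Adj (.inl p) (.inl a) :=
  id

@[simp] lemma not_incidenceGraph_adj_inr_inr : ¬ (incidenceGraph P L).Adj (.inr l) (.inr m) :=
  id

/-- The 2-colouring of an incidence graph that distinguishes points from lines. -/
def incidenceColoring (P L : Type*) [Membership P L] : (incidenceGraph P L).Coloring Bool :=
  Coloring.mk Sum.isLeft (by rintro (p | l) (q | m) h <;> simp_all)

@[simp] lemma incidenceColoring_apply (x : P ⊕ L) : incidenceColoring P L x = x.isLeft := rfl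

lemma ncard_neighborSet_inl (p : P) :
    ((incidenceGraph P L).neighborSet (.inl p)).ncard = lineCount L p := by
  have : (incidenceGraph P L).neighborSet (.inl p) = .inr '' {l : L | p ∈ l} := by
    ext (q | l) <;> simp
  rw [this, Set.ncard_image_of_injective _ Sum.inr_injective, lineCount, ← Nat.card_coe_set_eq]
  rfl

lemma ncard_neighborSet_inr (l : L) :
    ((incidenceGraph P L).neighborSet (.inr l)).ncard = pointCount P l := by
  have : (incidenceGraph P L).neighborSet (.inr l) = .inl '' {p : P | p ∈ l} := by
    ext (p | m) <;> simp
  rw [this, Set.ncard_image_of_injective _ Sum.inl_injective, pointCount, ← Nat.card_coe_set_eq]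
  rfl

lemma c4Free_incidenceGraph
    (h : ∀ {p q : P} {l m : L}, p ∈ l → q ∈ l → p ∈ m → q ∈ m → p = q ∨ l = m) :
    C4Free (incidenceGraph P L) := by
  rintro (p | l) (q | m) hne (r | k) ⟨hx, hy⟩ (s | j) ⟨hx', hy'⟩ <;>
    try first | cases hx | cases hy | cases hx' | cases hy'
  · exact congrArg _ ((h hx hy hx' hy').resolve_left (hne <| congrArg _ ·))
  · exact congrArg _ ((h hx hx' hy hy').resolve_right (hne <| congrArg _ ·))

lemma card_filter_incidenceColoring_inl [Fintype (P ⊕ L)] (p : P) :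
    (Finset.univ.filter (incidenceColoring P L · = incidenceColoring P L (.inl p))).card =
      Nat.card P := by
  have hrange : {x : P ⊕ L | incidenceColoring P L x = incidenceColoring P L (.inl p)} =
      Set.range .inl := by
    ext (q | l) <;> simp
  rw [← Set.ncard_coe_finset, Finset.coe_filter_univ, hrange, ← Nat.card_coe_set_eq,
    Nat.card_range_of_injective Sum.inl_injective]

lemma card_filter_incidenceColoring_inr [Fintype (P ⊕ L)] (l : L) :
    (Finset.univ.filter (incidenceColoring P L · = incidenceColoring P L (.inr l))).card =
      Nat.card L := by
  have hrange : {x : P ⊕ L | incidenceColoring P L x = incidenceColoring P L (.inr l)} =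
      Set.range .inr := by
    ext (q | l) <;> simp
  rw [← Set.ncard_coe_finset, Finset.coe_filter_univ, hrange, ← Nat.card_coe_set_eq,
    Nat.card_range_of_injective Sum.inr_injective]

section SecondNeighbors

variable [Fintype (P ⊕ L)] [DecidableEq (P ⊕ L)] [DecidableRel (incidenceGraph P L).Adj]
  {x : P ⊕ L}

lemma mem_secondNeighborFinset_inl :
    x ∈ secondNeighborFinset (incidenceGraph P L) (.inl p) ↔
      ∃ a, x = .inl a ∧ a ≠ p ∧ ∃ l : L, p ∈ l ∧ a ∈ l := by
  rcases x with a | m <;> simp [mem_secondNeighborFinset]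

lemma mem_secondNeighborFinset_inr :
    x ∈ secondNeighborFinset (incidenceGraph P L) (.inr l) ↔
      ∃ m, x = .inr m ∧ m ≠ l ∧ ∃ p : P, p ∈ l ∧ p ∈ m := by
  rcases x with a | m <;> simp [mem_secondNeighborFinset]

lemma mem_farFinset_inl :
    x ∈ farFinset (incidenceColoring P L) (.inl p) ↔
      ∃ a, x = .inl a ∧ a ≠ p ∧ ¬ ∃ l : L, p ∈ l ∧ a ∈ l := by
  rcases x with a | m <;> simp +contextual [mem_farFinset, mem_secondNeighborFinset_inl]

lemma mem_farFinset_inr :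
    x ∈ farFinset (incidenceColoring P L) (.inr l) ↔
      ∃ m, x = .inr m ∧ m ≠ l ∧ ¬ ∃ p : P, p ∈ l ∧ p ∈ m := by
  rcases x with a | m <;> simp +contextual [mem_farFinset, mem_secondNeighborFinset_inr]

end SecondNeighbors

/-- Elliptic semiplanes with `k` points on each line and `k` lines through each point: two points
lie on at most one line, and parallelism is transitive both for points and for lines, where two
points are parallel if they are equal or not joined by a line, and dually for lines. -/
structure IsEllipticSemiplane (P L : Type*) [Membership P L] (k : ℕ) : Prop where
  eq_or_eq : ∀ {p q : P} {l m : L}, p ∈ l → q ∈ l → p ∈ m → q ∈ m → p = q ∨ l = m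
  lineCount_eq : ∀ p : P, lineCount L p = k
  pointCount_eq : ∀ l : L, pointCount P l = k
  exists_line : ∀ {u a c : P}, a ≠ u → (∃ l : L, u ∈ l ∧ a ∈ l) → (¬ ∃ l : L, u ∈ l ∧ c ∈ l) →
    ∃ l : L, a ∈ l ∧ c ∈ l
  exists_point : ∀ {u a c : L}, a ≠ u → (∃ p : P, p ∈ u ∧ p ∈ a) →
    (¬ ∃ p : P, p ∈ u ∧ p ∈ c) → ∃ p : P, p ∈ a ∧ p ∈ c

namespace IsEllipticSemiplane

variable {k lam t : ℕ}

lemma farFinset_subset [Fintype (P ⊕ L)] [DecidableEq (P ⊕ L)]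
    [DecidableRel (incidenceGraph P L).Adj] (h : IsEllipticSemiplane P L k) (x y : P ⊕ L)
    (hy : y ∈ secondNeighborFinset (incidenceGraph P L) x) :
    farFinset (incidenceColoring P L) x ⊆ secondNeighborFinset (incidenceGraph P L) y := by
  intro z hz
  rcases x with u | u
  · obtain ⟨a, rfl, hau, hjoin⟩ := mem_secondNeighborFinset_inl.1 hy
    obtain ⟨c, rfl, hfar⟩ := mem_farFinset_inl.1 hz
    have hca : c ≠ a := by
      rintro rfl
      exact hfar.2 hjoin
    exact mem_secondNeighborFinset_inl.2 ⟨c, rfl, hca, h.exists_line hau hjoin hfar.2⟩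
  · obtain ⟨a, rfl, hau, hmeet⟩ := mem_secondNeighborFinset_inr.1 hy
    obtain ⟨c, rfl, hfar⟩ := mem_farFinset_inr.1 hz
    have hca : c ≠ a := by
      rintro rfl
      exact hfar.2 hmeet
    exact mem_secondNeighborFinset_inr.2 ⟨c, rfl, hca, h.exists_point hau hmeet hfar.2⟩

theorem isEGR [Finite P] [Finite L] [Nonempty P] (h : IsEllipticSemiplane P L k)
    (hP : Nat.card P = t + (k * (k - 1) + 1)) (hL : Nat.card L = t + (k * (k - 1) + 1))
    (hlam0 : lam ≠ 0) (hlam : lam + (k - 1) * t = (k - 1) ^ 3) :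
    (incidenceGraph P L).IsEGR (Nat.card P + Nat.card L) k 6 lam := by
  classical
  have := Fintype.ofFinite (P ⊕ L)
  have hC4 : C4Free (incidenceGraph P L) := c4Free_incidenceGraph h.eq_or_eq
  have hk : (incidenceGraph P L).IsRegularOfDegree k :=
    isRegularOfDegree_of_ncard_neighborSet <| by
      rintro (p | l)
      · rw [ncard_neighborSet_inl, h.lineCount_eq]
      · rw [ncard_neighborSet_inr, h.pointCount_eq]
  have hfar (x : P ⊕ L) : (farFinset (incidenceColoring P L) x).card = t := by
    refine Nat.add_right_cancel (m := k * (k - 1) + 1) ?_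
    rw [hC4.card_farFinset_add hk]
    rcases x with p | l
    · rw [card_filter_incidenceColoring_inl, hP]
    · rw [card_filter_incidenceColoring_inr, hL]
  rw [← Nat.card_sum]
  exact isEGR_of_farFinset_subset hC4 hk _ h.farFinset_subset hfar hlam0 hlam

end IsEllipticSemiplane

end IncidenceGraph

section Projective

open Configuration
open Configuration.ProjectivePlane (order lineCount_eq pointCount_eq card_points)
open Configuration.HasLines (mkLine mkLine_ax)
open Nondegenerate (eq_or_eq)

variable {P L : Type*} [Membership P L]

lemma exists_line_notMem_of_not_exists [HasLines P L] {p₀ u a c : P} (hc : c ≠ p₀)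
    (hau : a ≠ u) (hjoin : ∃ l : L, p₀ ∉ l ∧ u ∈ l ∧ a ∈ l)
    (hfar : ¬ ∃ l : L, p₀ ∉ l ∧ u ∈ l ∧ c ∈ l) : ∃ l : L, p₀ ∉ l ∧ a ∈ l ∧ c ∈ l := by
  have hac : a ≠ c := by
    rintro rfl
    exact hfar hjoin
  obtain ⟨m, hp₀m, hum, ham⟩ := hjoin
  have huc : u ≠ c := by
    rintro rfl
    exact hfar ⟨m, hp₀m, hum, hum⟩
  obtain ⟨hul, hcl⟩ := mkLine_ax (L := L) huc
  have hp₀l : p₀ ∈ (mkLine huc : L) := by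
    by_contra h
    exact hfar ⟨_, h, hul, hcl⟩
  obtain ⟨haj, hcj⟩ := mkLine_ax (L := L) hac
  refine ⟨mkLine hac, fun hp₀j => hp₀m ?_, haj, hcj⟩
  have hjl : (mkLine hac : L) = mkLine huc := (eq_or_eq hcj hp₀j hcl hp₀l).resolve_left hc
  have hml : m = mkLine huc := (eq_or_eq ham hum (hjl ▸ haj) hul).resolve_left hau
  exact hml ▸ hp₀l

/-- The points of the biaffine plane of type 2 obtained by deleting `p₀`, `l₀`, the lines through
`p₀` and the points on `l₀`. -/
abbrev BiaffinePoint (p₀ : P) (l₀ : L) : Type _ := {p : P // p ≠ p₀ ∧ p ∉ l₀}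

/-- The lines of the biaffine plane of type 2 obtained by deleting `p₀`, `l₀`, the lines through
`p₀` and the points on `l₀`. -/
abbrev BiaffineLine (p₀ : P) (l₀ : L) : Type _ := {l : L // l ≠ l₀ ∧ p₀ ∉ l}

instance (p₀ : P) (l₀ : L) : Membership (BiaffinePoint p₀ l₀) (BiaffineLine p₀ l₀) :=
  ⟨fun l p => p.1 ∈ l.1⟩

variable {p₀ : P} {l₀ : L}

lemma exists_biaffineLine [HasLines P L] {u a c : BiaffinePoint p₀ l₀} (hau : a ≠ u)
    (hjoin : ∃ l : BiaffineLine p₀ l₀, u ∈ l ∧ a ∈ l)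
    (hfar : ¬ ∃ l : BiaffineLine p₀ l₀, u ∈ l ∧ c ∈ l) :
    ∃ l : BiaffineLine p₀ l₀, a ∈ l ∧ c ∈ l := by
  have hiff (x y : BiaffinePoint p₀ l₀) :
      (∃ l : BiaffineLine p₀ l₀, x ∈ l ∧ y ∈ l) ↔ ∃ l : L, p₀ ∉ l ∧ x.1 ∈ l ∧ y.1 ∈ l :=
    ⟨fun ⟨l, hx, hy⟩ => ⟨l, l.2.2, hx, hy⟩,
      fun ⟨l, hl, hx, hy⟩ => ⟨⟨l, fun h => x.2.2 (h ▸ hx), hl⟩, hx, hy⟩⟩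
  rw [hiff] at hjoin hfar ⊢
  exact exists_line_notMem_of_not_exists c.2.1 (Subtype.coe_ne_coe.2 hau) hjoin hfar

variable [ProjectivePlane P L] [Finite P] [Finite L]

lemma ncard_lines_mem_notMem {p p₀ : P} (h : p ≠ p₀) :
    {l : L | p ∈ l ∧ p₀ ∉ l}.ncard = order P L := by
  have heq : {l : L | p ∈ l ∧ p₀ ∉ l} = {l | p ∈ l} \ {mkLine h} := by
    ext l
    obtain ⟨hp, hp₀⟩ := mkLine_ax (L := L) h
    simp only [Set.mem_ofPred_eq, Set.mem_sdiff, Set.mem_singleton_iff]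
    refine and_congr_right fun hpl => not_congr ⟨fun hp₀l => ?_, ?_⟩
    · exact (eq_or_eq hpl hp₀l hp hp₀).resolve_left h
    · rintro rfl
      exact hp₀
  have hcount : {l : L | p ∈ l}.ncard = order P L + 1 := by
    rw [← lineCount_eq L p, lineCount, ← Nat.card_coe_set_eq]
    rfl
  have hmem : mkLine h ∈ {l : L | p ∈ l} := (mkLine_ax h).1
  rw [heq, Set.ncard_sdiff_singleton_of_mem hmem, hcount, Nat.add_sub_cancel]

lemma card_biaffinePoint (h : p₀ ∉ l₀) : Nat.card (BiaffinePoint p₀ l₀) = order P L ^ 2 - 1 := by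
  have := Fintype.ofFinite P
  have hcompl : {p : P | p ≠ p₀ ∧ p ∉ l₀} = ({p | p ∈ l₀} ∪ {p₀})ᶜ := by
    ext p
    simp
  have hl₀ : {p : P | p ∈ l₀}.ncard = order P L + 1 := by
    rw [← pointCount_eq P l₀, pointCount, ← Nat.card_coe_set_eq]
    rfl
  have hunion : ({p : P | p ∈ l₀} ∪ {p₀}).ncard = order P L + 2 := by
    rw [Set.ncard_union_eq (by simpa using h), hl₀, Set.ncard_singleton]
  calc Nat.card (BiaffinePoint p₀ l₀)
    _ = {p : P | p ≠ p₀ ∧ p ∉ l₀}.ncard := Nat.card_coe_set_eq _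
    _ = order P L ^ 2 - 1 := by
      rw [hcompl, Set.ncard_compl, hunion, Nat.card_eq_fintype_card, card_points P L]
      omega

lemma card_biaffineLine (h : p₀ ∉ l₀) : Nat.card (BiaffineLine p₀ l₀) = order P L ^ 2 - 1 :=
  (card_biaffinePoint (P := Dual L) (L := Dual P) h).trans <| by rw [ProjectivePlane.Dual.order]

lemma lineCount_biaffineLine (p : BiaffinePoint p₀ l₀) :
    lineCount (BiaffineLine p₀ l₀) p = order P L := by
  have himage : Subtype.val '' {l : BiaffineLine p₀ l₀ | p ∈ l} = {l : L | p.1 ∈ l ∧ p₀ ∉ l} := by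
    ext l
    constructor
    · rintro ⟨l, hpl, rfl⟩
      exact ⟨hpl, l.2.2⟩
    · rintro ⟨hpl, hl⟩
      exact ⟨⟨l, fun h => p.2.2 (h ▸ hpl), hl⟩, hpl, rfl⟩
  rw [← ncard_lines_mem_notMem p.2.1, ← himage,
    Set.ncard_image_of_injective _ Subtype.val_injective, lineCount, ← Nat.card_coe_set_eq]
  rfl

lemma pointCount_biaffinePoint (l : BiaffineLine p₀ l₀) :
    pointCount (BiaffinePoint p₀ l₀) l = order P L :=
  (lineCount_biaffineLine (P := Dual L) (L := Dual P) (p₀ := l₀) (l₀ := p₀) l).trans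
    (ProjectivePlane.Dual.order P L)

theorem isEllipticSemiplane_biaffine (p₀ : P) (l₀ : L) :
    IsEllipticSemiplane (BiaffinePoint p₀ l₀) (BiaffineLine p₀ l₀) (order P L) where
  eq_or_eq hpl hql hpm hqm :=
    (eq_or_eq (P := P) (L := L) hpl hql hpm hqm).imp Subtype.ext Subtype.ext
  lineCount_eq := lineCount_biaffineLine
  pointCount_eq := pointCount_biaffinePoint
  exists_line := exists_biaffineLine
  exists_point := exists_biaffineLine (P := Dual L) (L := Dual P) (p₀ := l₀) (l₀ := p₀)

theorem isEGR_biaffine {lam : ℕ} (h : p₀ ∉ l₀)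
    (hlam : lam + (order P L - 1) * (order P L - 2) = (order P L - 1) ^ 3) :
    (incidenceGraph (BiaffinePoint p₀ l₀) (BiaffineLine p₀ l₀)).IsEGR (2 * order P L ^ 2 - 2)
      (order P L) 6 lam := by
  have hsemi := isEllipticSemiplane_biaffine p₀ l₀
  have hP := card_biaffinePoint h
  have hL := card_biaffineLine h
  obtain ⟨r, hr⟩ : ∃ r, order P L = r + 2 :=
    Nat.exists_eq_add_of_le' (ProjectivePlane.one_lt_order P L)
  rw [hr] at hlam hsemi hP hL ⊢
  have hcard : (r + 2) ^ 2 - 1 = r + ((r + 2) * (r + 2 - 1) + 1) := Nat.sub_eq_of_eq_add (by grind)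
  have : Nonempty (BiaffinePoint p₀ l₀) := Finite.card_pos_iff.1 (by omega)
  have hlam0 : lam ≠ 0 := by
    rintro rfl
    simp only [Nat.add_sub_cancel, Nat.add_one_sub_one] at hlam
    nlinarith [Nat.zero_le (r ^ 3), Nat.zero_le (r ^ 2)]
  convert hsemi.isEGR (hP.trans hcard) (hL.trans hcard) hlam0 hlam using 1
  omega

end Projective

section FieldPlane

open Configuration Configuration.ofField
open scoped LinearAlgebra.Projectivization

variable (K : Type*) [Field K] [Finite K] [DecidableEq K]

lemma order_fieldPlane :
    ProjectivePlane.order (ℙ K (Fin 3 → K)) (ℙ K (Fin 3 → K)) = Nat.card K := by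
  have := Fintype.ofFinite (ℙ K (Fin 3 → K))
  have hcard := ProjectivePlane.card_points (ℙ K (Fin 3 → K)) (ℙ K (Fin 3 → K))
  rw [← Nat.card_eq_fintype_card, Projectivization.card_of_finrank K (Fin 3 → K) (n := 3) (by simp)]
    at hcard
  simp only [Finset.sum_range_succ, Finset.range_zero, Finset.sum_empty] at hcard
  nlinarith

lemma exists_projectivePlane_order_eq {q : ℕ} (hq : IsPrimePow q) :
    ∃ (P L : Type) (_ : Membership P L) (_ : ProjectivePlane P L) (_ : Finite P) (_ : Finite L),
      ProjectivePlane.order P L = q := by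
  classical
  obtain ⟨p, k, hp, hk, rfl⟩ := (isPrimePow_nat_iff q).1 hq
  have : Fact p.Prime := ⟨hp⟩
  let K := GaloisField p k
  exact ⟨ℙ K (Fin 3 → K), ℙ K (Fin 3 → K), inferInstance, inferInstance, inferInstance,
    inferInstance, (order_fieldPlane K).trans (GaloisField.card p k hk.ne')⟩

lemma exists_notMem (P L : Type*) [Membership P L] [ProjectivePlane P L] :
    ∃ (p : P) (l : L), p ∉ l :=
  let ⟨p, _, _, _, l, _, h, _⟩ := ProjectivePlane.exists_config (P := P) (L := L)
  ⟨p, l, h⟩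

end FieldPlane

lemma biaffine_lam_add {q : ℕ} (hq : 3 ≤ q) :
    (q - 1) * (q ^ 2 - 3 * q + 3) + (q - 1) * (q - 2) = (q - 1) ^ 3 := by
  obtain ⟨r, rfl⟩ := Nat.exists_eq_add_of_le' hq
  have hsq : (r + 3) ^ 2 - 3 * (r + 3) = (r + 3) * r := by
    rw [sq, ← Nat.sub_mul, Nat.add_sub_cancel, mul_comm]
  have : r + 3 - 2 = r + 1 := by omega
  have : r + 3 - 1 = r + 2 := by omega
  simp only [*]
  ring

theorem le_of_isEGR_biaffine_parameters {q n : ℕ} (hq3 : 3 ≤ q) {V : Type*} {G : SimpleGraph V}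
    (hbip : G.Colorable 2) (hG : G.IsEGR n q 6 ((q - 1) * (q ^ 2 - 3 * q + 3))) :
    2 * q ^ 2 - 2 ≤ n := by
  have hbound := le_of_isEGR_of_colorable_two hG hbip
  have hlam := biaffine_lam_add hq3
  obtain ⟨r, rfl⟩ := Nat.exists_eq_add_of_le' hq3
  have hscaled : (r + 2) * (2 * (r + 3) ^ 2) ≤ (r + 2) * (n + 2) := by
    simp only [show r + 3 - 1 = r + 2 by omega, show r + 3 - 2 = r + 1 by omega] at hbound hlam
    linarith
  have := Nat.le_of_mul_le_mul_left hscaled (by omega)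
  omega

theorem biaffine_type2_extremal_general (q : ℕ) (hq3 : 3 ≤ q) :
    (∀ (P L : Type*) [Membership P L] [Configuration.ProjectivePlane P L] [Finite P] [Finite L]
      (p₀ : P) (l₀ : L), p₀ ∉ l₀ → Configuration.ProjectivePlane.order P L = q →
      (incidenceGraph (BiaffinePoint p₀ l₀) (BiaffineLine p₀ l₀)).Colorable 2 ∧
      (incidenceGraph (BiaffinePoint p₀ l₀) (BiaffineLine p₀ l₀)).IsEGR
        (2 * q ^ 2 - 2) q 6 ((q - 1) * (q ^ 2 - 3 * q + 3))) ∧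
    ∀ (n : ℕ) (V : Type*) (G : SimpleGraph V), G.Colorable 2 →
      G.IsEGR n q 6 ((q - 1) * (q ^ 2 - 3 * q + 3)) → 2 * q ^ 2 - 2 ≤ n := by
  refine ⟨?_, fun n V G => le_of_isEGR_biaffine_parameters hq3⟩
  rintro P L _ _ _ _ p₀ l₀ h rfl
  exact ⟨(incidenceColoring _ _).colorable, isEGR_biaffine h (biaffine_lam_add hq3)⟩

/-- For every prime power `q ≥ 3`, the incidence graph of a biaffine plane of order `q`
of type 2 is an extremal bipartite `egr(2q²-2, q, 6, (q-1)(q²-3q+3))` graph: such a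
bipartite edge-girth-regular graph exists, and every bipartite edge-girth-regular graph
with these parameters `(q, 6, (q-1)(q²-3q+3))` has at least `2q²-2` vertices. -/
theorem biaffine_type2_extremal (q : ℕ) (hq : IsPrimePow q) (hq3 : 3 ≤ q) :
    (∃ (V : Type) (G : SimpleGraph V), G.Colorable 2 ∧
      G.IsEGR (2 * q ^ 2 - 2) q 6 ((q - 1) * (q ^ 2 - 3 * q + 3))) ∧
    ∀ (n : ℕ) (V : Type) (G : SimpleGraph V), G.Colorable 2 →
      G.IsEGR n q 6 ((q - 1) * (q ^ 2 - 3 * q + 3)) → 2 * q ^ 2 - 2 ≤ n := by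
  obtain ⟨P, L, _, _, _, _, horder⟩ := exists_projectivePlane_order_eq hq
  obtain ⟨p₀, l₀, h⟩ := exists_notMem P L
  obtain ⟨hexists, hbound⟩ := biaffine_type2_extremal_general q hq3
  exact ⟨⟨_, _, hexists P L p₀ l₀ h horder⟩, hbound⟩
end

section
/- For every prime power q ≥ 3 there exists a bipartite egr(2q³, q, 8, (q−1)²((q−2)²+1)) graph, i.e., a bipartite q-regular simple graph on 2q³ vertices of girth 8 in which every edge lies on exactly (q−1)²((q−2)²+1) cycles of length 8. -/
/-!
Points `(a, b, c)` and lines `[x, y, z]` over `F = 𝔽_q` are incident when `b + y = a x` and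
`c + z = a² x`. This is a generalized quadrangle of order `(q, q)` without the vertices at distance
at most two from a fixed edge. A point has exactly one line with any prescribed `x`, and a line has
exactly one point with any prescribed `a`, so a walk amounts to its starting vertex and a list of
elements of `F`; it does not backtrack when consecutive `a`'s and consecutive `x`'s differ.

Around a closed walk through points with first coordinates `aᵢ` and lines with first coordinates
`xᵢ`, let `dᵢ` be the difference of the `x`'s of the two lines used at the `i`-th point. The
incidence equations telescope: the walk closes up iff `∑ dᵢ = ∑ aᵢ dᵢ = ∑ aᵢ² dᵢ = 0`, which says
that `∑ dᵢ f(aᵢ) = 0` for every polynomial `f` of degree at most two. With three points, an `f`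
vanishing at two of them forces the remaining `d` to be zero, so there are no hexagons, and
likewise no quadrilaterals: the girth is at least 8.

With four points and `a₁`, `x₁` fixed, either `a₃ = a₁`, and then `a₄ = a₂` and
`(d₁, d₂, d₃, d₄) = (d₁, d₂, -d₁, -d₂)`; or the four `aᵢ` are distinct, and then `d` is a multiple
of the vector of signed Vandermonde minors. This leaves `(q-1)³` and `(q-1)·(q-1)(q-2)(q-3)` closed
walks, respectively, in total `(q-1)²((q-2)²+1)`. Because the girth is 8, non-backtracking walks of
length 7 are paths, so this number counts the paths of length 7 between two adjacent vertices; a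
cycle through their edge is such a path closed up, in either of two directions.
-/

open SimpleGraph

/-! ### Cycles through an edge -/

section CyclesAndPaths

variable {V : Type*} {G : SimpleGraph V} {u v w : V}

lemma isCycle_cons_iff_isPath (h : G.Adj u v) {p : G.Walk v u} (hp : 2 ≤ p.length) :
    (Walk.cons h p).IsCycle ↔ p.IsPath := by
  refine (Walk.cons_isCycle_iff p h).trans (and_iff_left_of_imp fun hpath hmem ↦ ?_)
  have := hpath.length_eq_one_of_mem_edges (Sym2.eq_swap ▸ hmem)
  omega

-- The first return to an earlier vertex would close up a cycle shorter than the girth.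
lemma isPath_of_isChain_edges {p : G.Walk u v}
    (hchain : p.edges.IsChain (· ≠ ·)) (hlt : p.length < G.egirth) : p.IsPath := by
  classical
  induction p with
  | nil => exact Walk.IsPath.nil
  | @cons u w _ h p ih =>
    rw [Walk.edges_cons, List.isChain_cons] at hchain
    have hp : p.IsPath := ih hchain.2 (lt_of_le_of_lt (by simp) hlt)
    refine hp.cons fun hu ↦ ?_
    rcases le_or_gt 2 (p.takeUntil u hu).length with hlen | hlen
    · have hcycle := (isCycle_cons_iff_isPath h hlen).2 (hp.takeUntil hu)
      refine hlt.not_ge ((egirth_le_length hcycle).trans ?_)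
      simpa using p.length_takeUntil_le_length hu
    · have hsnd : p.snd = u := by
        rw [← p.snd_takeUntil h.ne hu]
        exact Walk.getVert_of_length_le _ (by omega)
      cases p with
      | nil => exact h.ne (by simpa using hu)
      | cons h' p => exact hchain.1 s(w, u) (by simp [← hsnd]) Sym2.eq_swap

lemma isPath_iff_isChain_edges {p : G.Walk u v} (hlt : p.length < G.egirth) :
    p.IsPath ↔ p.edges.IsChain (· ≠ ·) :=
  ⟨fun hp ↦ hp.isTrail.edges_nodup.isChain, fun h ↦ isPath_of_isChain_edges h hlt⟩

lemma mem_edges_iff_snd_or_penultimate {c : G.Walk u u} (hc : c.IsCycle) :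
    s(u, v) ∈ c.edges ↔ c.snd = v ∨ c.penultimate = v := by
  constructor
  · cases c with
    | nil => simp
    | cons h p =>
      have hp : p.IsPath := ((Walk.cons_isCycle_iff p h).1 hc).1
      rw [Walk.edges_cons, List.mem_cons, Sym2.congr_right]
      rintro (rfl | hmem)
      · simp
      · have hnil : ¬p.Nil := fun hnil ↦ by simp [Walk.edges_eq_nil.2 hnil] at hmem
        rw [Walk.penultimate_cons_of_not_nil _ _ hnil]
        exact .inr (hp.eq_penultimate_of_mem_edges hmem).symm
  · rintro (rfl | rfl)
    · exact c.mk_start_snd_mem_edges hc.not_nil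
    · rw [Sym2.eq_swap]
      exact c.mk_penultimate_end_mem_edges hc.not_nil

lemma card_isPath_comm (u v : V) (n : ℕ) :
    Nat.card {p : G.Walk u v // p.IsPath ∧ p.length = n} =
      Nat.card {p : G.Walk v u // p.IsPath ∧ p.length = n} :=
  Nat.card_congr
    ⟨fun p ↦ ⟨p.1.reverse, p.2.1.reverse, by simp [p.2.2]⟩,
     fun p ↦ ⟨p.1.reverse, p.2.1.reverse, by simp [p.2.2]⟩,
     fun p ↦ by simp, fun p ↦ by simp⟩

lemma card_isCycle_snd_eq (h : G.Adj u v) {n : ℕ} (hn : 2 ≤ n) :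
    Nat.card {c : G.Walk u u // (c.IsCycle ∧ c.length = n + 1) ∧ c.snd = v} =
      Nat.card {p : G.Walk v u // p.IsPath ∧ p.length = n} := by
  symm
  refine Nat.card_eq_of_bijective (fun p ↦ ⟨.cons h p.1,
    ⟨(isCycle_cons_iff_isPath h (hn.trans p.2.2.ge)).2 p.2.1, by simp [p.2.2]⟩, by simp⟩) ⟨?_, ?_⟩
  · rintro ⟨p, _⟩ ⟨p', _⟩ heq
    simpa using heq
  · rintro ⟨c, ⟨hc, hlen⟩, hsnd⟩
    cases c with
    | nil => simp at hc
    | cons h' p =>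
      obtain rfl : _ = v := by simpa using hsnd
      exact ⟨⟨p, ((Walk.cons_isCycle_iff p h').1 hc).1, by simpa using hlen⟩, rfl⟩

lemma card_isCycle_mem_edges (h : G.Adj u v) {n : ℕ} (hn : 2 ≤ n) :
    Nat.card {c : G.Walk u u // c.IsCycle ∧ c.length = n + 1 ∧ s(u, v) ∈ c.edges} =
      2 * Nat.card {p : G.Walk v u // p.IsPath ∧ p.length = n} := by
  classical
  let P (c : G.Walk u u) : Prop := (c.IsCycle ∧ c.length = n + 1) ∧ c.snd = v
  let Q (c : G.Walk u u) : Prop := (c.IsCycle ∧ c.length = n + 1) ∧ c.penultimate = v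
  have hdisj : Disjoint P Q :=
    Pi.disjoint_iff.2 fun c ↦ Prop.disjoint_iff.2 (by
      rintro ⟨⟨⟨hc, -⟩, hsnd⟩, -, hpen⟩
      exact hc.snd_ne_penultimate (hsnd.trans hpen.symm))
  have hreverse : {c // Q c} ≃ {c // P c} :=
    ⟨fun c ↦ ⟨c.1.reverse, ⟨c.2.1.1.reverse, by simp [c.2.1.2]⟩, by simp [c.2.2]⟩,
     fun c ↦ ⟨c.1.reverse, ⟨c.2.1.1.reverse, by simp [c.2.1.2]⟩, by simp [c.2.2]⟩,
     fun c ↦ by simp, fun c ↦ by simp⟩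
  calc
    _ = Nat.card {c // P c ∨ Q c} := by
      refine Nat.card_congr (Equiv.subtypeEquivRight fun c ↦ ?_)
      rw [← and_assoc, ← and_or_left]
      exact and_congr_right fun hc ↦ mem_edges_iff_snd_or_penultimate hc.1
    _ = Nat.card (Bool × {c // P c}) :=
      Nat.card_congr ((subtypeOrEquiv P Q hdisj).trans
        (((Equiv.refl _).sumCongr hreverse).trans (Equiv.boolProdEquivSum _).symm))
    _ = _ := by
      rw [Nat.card_prod, card_isCycle_snd_eq h hn, Nat.card_eq_fintype_card, Fintype.card_bool]

end CyclesAndPaths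

/-! ### The incidence graph and its walks -/

namespace AffineQuadrangle

variable {R : Type*}

/-- The vertices of the incidence graph: the summand `inl` holds the points `(a, b, c)`, the summand
`inr` the lines `[x, y, z]`. -/
abbrev Vertex (R : Type*) : Type _ := (R × R × R) ⊕ (R × R × R)

/-- The first coordinate `a` of a point `(a, b, c)` or `x` of a line `[x, y, z]`. -/
def coord : Vertex R → R := Sum.elim Prod.fst Prod.fst

variable [CommRing R]

/-- The incidence graph in which the point `(a, b, c)` lies on the line `[x, y, z]` when
`b + y = a x` and `c + z = a² x`. -/
def graph (R : Type*) [CommRing R] : SimpleGraph (Vertex R) where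
  Adj
    | .inl (a, b, c), .inr (x, y, z) => b + y = a * x ∧ c + z = a ^ 2 * x
    | .inr (x, y, z), .inl (a, b, c) => b + y = a * x ∧ c + z = a ^ 2 * x
    | _, _ => False
  symm := ⟨by rintro (⟨a, b, c⟩ | ⟨x, y, z⟩) (⟨a', b', c'⟩ | ⟨x', y', z'⟩) h <;> exact h⟩
  loopless := ⟨by rintro (⟨a, b, c⟩ | ⟨x, y, z⟩) h <;> exact h⟩

/-- The neighbour of a vertex with a prescribed first coordinate. -/
def step : Vertex R → R → Vertex R
  | .inl (a, b, c), x => .inr (x, a * x - b, a ^ 2 * x - c)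
  | .inr (x, y, z), a => .inl (a, a * x - y, a ^ 2 * x - z)

lemma coord_step (v : Vertex R) (t : R) : coord (step v t) = t := by
  rcases v with ⟨a, b, c⟩ | ⟨x, y, z⟩ <;> rfl

lemma step_injective (v : Vertex R) : Function.Injective (step v) :=
  Function.LeftInverse.injective (coord_step v)

lemma adj_step (v : Vertex R) (t : R) : (graph R).Adj v (step v t) := by
  rcases v with ⟨a, b, c⟩ | ⟨x, y, z⟩ <;> simp [graph, step]

lemma step_coord {v w : Vertex R} (h : (graph R).Adj v w) : step v (coord w) = w := by
  rcases v with ⟨a, b, c⟩ | ⟨x, y, z⟩ <;> rcases w with ⟨a', b', c'⟩ | ⟨x', y', z'⟩ <;>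
    simp only [graph, step, coord, Sum.elim_inl, Sum.elim_inr] at h ⊢
  · rw [← h.1, ← h.2, add_sub_cancel_left, add_sub_cancel_left]
  · rw [← h.1, ← h.2, add_sub_cancel_right, add_sub_cancel_right]

lemma neighborSet_eq_range_step (v : Vertex R) : (graph R).neighborSet v = Set.range (step v) :=
  Set.ext fun w ↦ ⟨fun h ↦ ⟨coord w, step_coord h⟩, by rintro ⟨t, rfl⟩; exact adj_step v t⟩

lemma ncard_neighborSet (v : Vertex R) : ((graph R).neighborSet v).ncard = Nat.card R := by
  rw [neighborSet_eq_range_step, ← Set.image_univ, Set.ncard_image_of_injective _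
    (step_injective v), Set.ncard_univ]

lemma card_vertex (R : Type*) [Finite R] : Nat.card (Vertex R) = 2 * Nat.card R ^ 3 := by
  rw [Nat.card_sum, Nat.card_prod, Nat.card_prod]
  ring

lemma colorable_two : (graph R).Colorable 2 :=
  ⟨Coloring.mk (Sum.elim (fun _ ↦ 0) fun _ ↦ 1) fun {v w} h ↦ by
    rcases v with v | v <;> rcases w with w | w <;> simp_all [graph]⟩

lemma edge_ne_edge_step_iff {u v : Vertex R} (h : (graph R).Adj u v) (t : R) :
    s(u, v) ≠ s(v, step v t) ↔ t ≠ coord u := by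
  rw [Sym2.eq_swap, ne_eq, Sym2.congr_right, ← (step_injective v).ne_iff, step_coord h.symm,
    ne_comm]

/-- The walk from `v` whose subsequent vertices have the first coordinates listed in `t`. -/
def ofCoords (v : Vertex R) : (t : List R) → (graph R).Walk v (t.foldl step v)
  | [] => .nil
  | a :: t => .cons (adj_step v a) (ofCoords (step v a) t)

lemma length_ofCoords (v : Vertex R) (t : List R) : (ofCoords v t).length = t.length := by
  induction t generalizing v with
  | nil => rfl
  | cons a t ih => simp [ofCoords, ih]

/-- The first coordinates of the vertices of a walk, without that of its starting vertex. -/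
def coords {v : Vertex R} : {w : Vertex R} → (graph R).Walk v w → List R
  | _, .nil => []
  | _, .cons (v := u) _ p => coord u :: coords p

lemma foldl_step_coords {v w : Vertex R} (p : (graph R).Walk v w) :
    (coords p).foldl step v = w := by
  induction p with
  | nil => rfl
  | cons h p ih => rw [coords, List.foldl_cons, step_coord h, ih]

lemma support_ofCoords (v : Vertex R) (t : List R) :
    (ofCoords v t).support = t.scanl step v := by
  induction t generalizing v with
  | nil => rfl
  | cons a t ih =>
    rw [List.scanl_cons, ← ih]
    rfl

lemma scanl_step_coords {v w : Vertex R} (p : (graph R).Walk v w) :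
    (coords p).scanl step v = p.support := by
  induction p with
  | nil => rfl
  | cons h p ih => rw [coords, List.scanl_cons, step_coord h, ih, Walk.support_cons]

lemma coords_ofCoords (v : Vertex R) (t : List R) : coords (ofCoords v t) = t := by
  induction t generalizing v with
  | nil => rfl
  | cons a t ih => exact congrArg₂ List.cons (coord_step v a) (ih _)

/-- Walks from `v` to `w` correspond to the coordinate lists that lead from `v` to `w`. -/
def walkEquiv (v w : Vertex R) : {t : List R // t.foldl step v = w} ≃ (graph R).Walk v w where
  toFun t := (ofCoords v t.1).copy rfl t.2
  invFun p := ⟨coords p, foldl_step_coords p⟩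
  left_inv := by
    rintro ⟨t, rfl⟩
    exact Subtype.ext (coords_ofCoords v t)
  right_inv p := Walk.ext_support (by rw [Walk.support_copy, support_ofCoords, scanl_step_coords])

lemma length_walkEquiv {v w : Vertex R} (t : {t : List R // t.foldl step v = w}) :
    (walkEquiv v w t).length = t.1.length := by
  rcases t with ⟨t, rfl⟩
  exact length_ofCoords v t

lemma edges_walkEquiv {v w : Vertex R} (t : {t : List R // t.foldl step v = w}) :
    (walkEquiv v w t).edges = (ofCoords v t.1).edges := by
  rcases t with ⟨t, rfl⟩
  rfl

lemma isChain_edges_ofCoords_singleton (v : Vertex R) (a : R) :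
    (ofCoords v [a]).edges.IsChain (· ≠ ·) :=
  List.isChain_singleton _

lemma isChain_edges_ofCoords_cons_cons (v : Vertex R) (a b : R) (t : List R) :
    (ofCoords v (a :: b :: t)).edges.IsChain (· ≠ ·) ↔
      b ≠ coord v ∧ (ofCoords (step v a) (b :: t)).edges.IsChain (· ≠ ·) :=
  List.isChain_cons_cons.trans (and_congr_left' (edge_ne_edge_step_iff (adj_step v a) b))

/-! ### Girth -/

section Girth

variable [IsDomain R]

lemma eq_of_hexagon {a₁ a₂ a₃ x₁ x₂ x₃ : R} (h₁₃ : a₁ ≠ a₃) (h₂₃ : a₂ ≠ a₃)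
    (hfst : a₁ * (x₃ - x₁) + a₂ * (x₁ - x₂) + a₃ * (x₂ - x₃) = 0)
    (hsq : a₁ ^ 2 * (x₃ - x₁) + a₂ ^ 2 * (x₁ - x₂) + a₃ ^ 2 * (x₂ - x₃) = 0) : x₂ = x₃ := by
  have h : (a₁ - a₃) * (a₂ - a₃) * (x₂ - x₃) = 0 := by
    linear_combination hsq - (a₁ + a₂) * hfst
  simpa [sub_eq_zero, h₁₃, h₂₃] using h

lemma length_ne_four_of_isChain_edges {v : Vertex R} {c : (graph R).Walk v v}
    (hc : c.edges.IsChain (· ≠ ·)) : c.length ≠ 4 := by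
  intro hlen
  obtain ⟨⟨t, ht⟩, rfl⟩ := (walkEquiv v v).surjective c
  rw [edges_walkEquiv] at hc
  rw [length_walkEquiv] at hlen
  obtain ⟨s₁, s₂, s₃, s₄, rfl⟩ := List.length_eq_four.1 hlen
  simp only [isChain_edges_ofCoords_cons_cons, coord_step] at hc
  obtain ⟨-, h₃, h₄, -⟩ := hc
  rcases v with ⟨a, b, c⟩ | ⟨x, y, z⟩ <;>
    simp only [List.foldl, step, Sum.inl.injEq, Sum.inr.injEq, Prod.mk.injEq] at ht
  · obtain ⟨rfl, hb, -⟩ := ht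
    exact mul_ne_zero (sub_ne_zero.2 h₄) (sub_ne_zero.2 h₃) (by linear_combination hb)
  · obtain ⟨rfl, hy, -⟩ := ht
    exact mul_ne_zero (sub_ne_zero.2 h₃) (sub_ne_zero.2 h₄) (by linear_combination hy)

lemma length_ne_six_of_isChain_edges {v : Vertex R} {c : (graph R).Walk v v}
    (hc : c.edges.IsChain (· ≠ ·)) : c.length ≠ 6 := by
  intro hlen
  obtain ⟨⟨t, ht⟩, rfl⟩ := (walkEquiv v v).surjective c
  rw [edges_walkEquiv] at hc
  rw [length_walkEquiv] at hlen
  match t, ht, hlen with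
  | [s₁, s₂, s₃, s₄, s₅, s₆], ht, _ =>
    simp only [isChain_edges_ofCoords_cons_cons, coord_step] at hc
    obtain ⟨-, h₃, h₄, h₅, h₆, -⟩ := hc
    rcases v with ⟨a, b, c⟩ | ⟨x, y, z⟩ <;>
      simp only [List.foldl, step, Sum.inl.injEq, Sum.inr.injEq, Prod.mk.injEq] at ht
    · obtain ⟨rfl, hb, hc'⟩ := ht
      exact h₅.symm (eq_of_hexagon (x₁ := s₁) h₆ h₄.symm (by linear_combination hb)
        (by linear_combination hc'))
    · obtain ⟨rfl, hy, hz⟩ := ht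
      exact h₄.symm (eq_of_hexagon (x₁ := s₆) h₅ h₃.symm (by linear_combination -hy)
        (by linear_combination -hz))

lemma eight_le_egirth : 8 ≤ (graph R).egirth := by
  refine le_egirth.2 fun v c hc ↦ ?_
  have heven : Even c.length := two_colorable_iff_forall_loop_even.1 colorable_two v c
  have hchain : c.edges.IsChain (· ≠ ·) := hc.edges_nodup.isChain
  have h₃ := hc.three_le_length
  have h₄ := length_ne_four_of_isChain_edges hchain
  have h₆ := length_ne_six_of_isChain_edges hchain
  obtain ⟨k, hk⟩ := heven
  have : 8 ≤ c.length := by omega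
  exact_mod_cast this

end Girth

/-! ### Octagons through a flag -/

/-- The non-backtracking closed walks of length 8 through a fixed incident pair of a point and a
line with first coordinates `a₁` and `x₁`, where `aᵢ` belongs to the point between the lines of
`xᵢ₋₁` and `xᵢ` (indices modulo 4). The `moment` fields say that the walk closes up. Of the
non-backtracking conditions, the two at the fixed edge are left out, as over a domain they follow
from the others. -/
@[ext]
structure Octagon (a₁ x₁ : R) where
  (a₂ a₃ a₄ x₂ x₃ x₄ : R)
  x₁_ne_x₂ : x₁ ≠ x₂
  x₂_ne_x₃ : x₂ ≠ x₃
  x₃_ne_x₄ : x₃ ≠ x₄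
  a₂_ne_a₃ : a₂ ≠ a₃
  a₃_ne_a₄ : a₃ ≠ a₄
  a₄_ne_a₁ : a₄ ≠ a₁
  moment_one : a₁ * (x₄ - x₁) + a₂ * (x₁ - x₂) + a₃ * (x₂ - x₃) + a₄ * (x₃ - x₄) = 0
  moment_two : a₁ ^ 2 * (x₄ - x₁) + a₂ ^ 2 * (x₁ - x₂) + a₃ ^ 2 * (x₂ - x₃) +
    a₄ ^ 2 * (x₃ - x₄) = 0

namespace Octagon

variable {a₁ x₁ : R} (o : Octagon a₁ x₁)

lemma sum_quadratic_eq_zero (r s : R) :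
    (a₁ - r) * (a₁ - s) * (o.x₄ - x₁) + (o.a₂ - r) * (o.a₂ - s) * (x₁ - o.x₂) +
      (o.a₃ - r) * (o.a₃ - s) * (o.x₂ - o.x₃) + (o.a₄ - r) * (o.a₄ - s) * (o.x₃ - o.x₄) = 0 := by
  linear_combination o.moment_two - (r + s) * o.moment_one

lemma add_quadratic_eq_zero :
    (a₁ - o.a₂) * (a₁ - o.a₄) * (o.x₄ - x₁) +
      (o.a₃ - o.a₂) * (o.a₃ - o.a₄) * (o.x₂ - o.x₃) = 0 := by
  simpa using o.sum_quadratic_eq_zero o.a₂ o.a₄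

section Domain

variable [IsDomain R]

lemma x₄_ne_x₁ : o.x₄ ≠ x₁ := by
  intro h
  simpa [h, sub_eq_zero, o.a₂_ne_a₃.symm, o.a₃_ne_a₄, o.x₂_ne_x₃] using o.add_quadratic_eq_zero

lemma a₂_ne_a₁ : o.a₂ ≠ a₁ := by
  intro h
  simpa [h ▸ o.a₂_ne_a₃.symm, h, sub_eq_zero, o.a₃_ne_a₄, o.x₂_ne_x₃] using o.add_quadratic_eq_zero

lemma a₃_eq_a₁_iff : o.a₃ = a₁ ↔ o.a₂ = o.a₄ := by
  have h := o.sum_quadratic_eq_zero a₁ o.a₂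
  constructor <;> intro heq
  · simpa [heq, sub_eq_zero, o.a₄_ne_a₁, o.x₃_ne_x₄, eq_comm] using h
  · simpa [← heq, sub_eq_zero, o.a₂_ne_a₃.symm, o.x₂_ne_x₃] using h

lemma x₃_eq_of_a₃_eq (h : o.a₃ = a₁) : o.x₃ = o.x₂ + o.x₄ - x₁ := by
  have hmul : (a₁ - o.a₂) * (o.x₄ - x₁ + o.x₂ - o.x₃) = 0 := by
    have hmoment := o.moment_one
    rw [h, ← o.a₃_eq_a₁_iff.1 h] at hmoment
    linear_combination hmoment
  have hsum := (mul_eq_zero.1 hmul).resolve_left (sub_ne_zero.2 o.a₂_ne_a₁.symm)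
  linear_combination -hsum

/-- An octagon with `a₃ = a₁` is given by a free choice of `a₂ = a₄ ≠ a₁` and `x₂, x₄ ≠ x₁`. -/
def parallelogramEquiv (a₁ x₁ : R) :
    {o : Octagon a₁ x₁ // o.a₃ = a₁} ≃ {a // a ≠ a₁} × {x // x ≠ x₁} × {x // x ≠ x₁} where
  toFun o := (⟨o.1.a₂, o.1.a₂_ne_a₁⟩, ⟨o.1.x₂, o.1.x₁_ne_x₂.symm⟩, ⟨o.1.x₄, o.1.x₄_ne_x₁⟩)
  invFun p := ⟨{
    a₂ := p.1, a₃ := a₁, a₄ := p.1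
    x₂ := p.2.1, x₃ := p.2.1 + p.2.2 - x₁, x₄ := p.2.2
    x₁_ne_x₂ := p.2.1.2.symm
    x₂_ne_x₃ h := p.2.2.2 (by linear_combination -h)
    x₃_ne_x₄ h := p.2.1.2 (by linear_combination h)
    a₂_ne_a₃ := p.1.2
    a₃_ne_a₄ := p.1.2.symm
    a₄_ne_a₁ := p.1.2
    moment_one := by ring
    moment_two := by ring }, rfl⟩
  left_inv := fun ⟨o, h⟩ ↦ Subtype.ext <| by
    ext
    exacts [rfl, h.symm, o.a₃_eq_a₁_iff.1 h, rfl, (o.x₃_eq_of_a₃_eq h).symm, rfl]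
  right_inv _ := rfl

lemma ext_of_a₃_ne_a₁ {o o' : Octagon a₁ x₁} (h : o.a₃ ≠ a₁) (h₂ : o.a₂ = o'.a₂)
    (h₃ : o.a₃ = o'.a₃) (h₄ : o.a₄ = o'.a₄) (hx : o.x₄ = o'.x₄) : o = o' := by
  have h₂₄ : o.a₂ ≠ o.a₄ := mt o.a₃_eq_a₁_iff.2 h
  have hx₂ : (o.a₂ - o.a₃) * (o.a₂ - o.a₄) * (o.x₂ - o'.x₂) = 0 := by
    have h' := o'.sum_quadratic_eq_zero o.a₃ o.a₄
    rw [← h₂, ← h₃, ← h₄, ← hx] at h'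
    linear_combination h' - o.sum_quadratic_eq_zero o.a₃ o.a₄
  have hx₃ : (o.a₄ - o.a₂) * (o.a₄ - o.a₃) * (o.x₃ - o'.x₃) = 0 := by
    have h' := o'.sum_quadratic_eq_zero o.a₂ o.a₃
    rw [← h₂, ← h₃, ← h₄, ← hx] at h'
    linear_combination o.sum_quadratic_eq_zero o.a₂ o.a₃ - h'
  refine Octagon.ext h₂ h₃ h₄ ?_ ?_ hx
  · simpa [sub_eq_zero, o.a₂_ne_a₃, h₂₄] using hx₂
  · simpa [sub_eq_zero, o.a₃_ne_a₄.symm, h₂₄.symm] using hx₃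

/-- The triple `(a₂, a₃, a₄)` of an octagon whose points have distinct first coordinates. -/
def nodes (h : o.a₃ ≠ a₁) : Fin 3 ↪ {a // a ≠ a₁} where
  toFun := ![⟨o.a₂, o.a₂_ne_a₁⟩, ⟨o.a₃, h⟩, ⟨o.a₄, o.a₄_ne_a₁⟩]
  inj' := by
    have h₂₄ : o.a₂ ≠ o.a₄ := mt o.a₃_eq_a₁_iff.2 h
    simp [Function.Injective, Fin.forall_fin_succ, o.a₂_ne_a₃, o.a₃_ne_a₄, h₂₄, o.a₂_ne_a₃.symm,
      o.a₃_ne_a₄.symm, h₂₄.symm]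

lemma nodes_inj {o o' : Octagon a₁ x₁} {h : o.a₃ ≠ a₁} {h' : o'.a₃ ≠ a₁} :
    o.nodes h = o'.nodes h' ↔ o.a₂ = o'.a₂ ∧ o.a₃ = o'.a₃ ∧ o.a₄ = o'.a₄ := by
  rw [← DFunLike.coe_injective.eq_iff]
  change ![_, _, _] = ![_, _, _] ↔ _
  simp

end Domain

section Field

variable {F : Type*} [Field F] {a₁ x₁ : F}

lemma exists_of_pairwise_ne {a₂ a₃ a₄ x₄ : F} (h₂ : a₂ ≠ a₁) (h₃ : a₃ ≠ a₁) (h₄ : a₄ ≠ a₁)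
    (h₂₃ : a₂ ≠ a₃) (h₂₄ : a₂ ≠ a₄) (h₃₄ : a₃ ≠ a₄) (hx : x₄ ≠ x₁) :
    ∃ o : Octagon a₁ x₁, o.a₂ = a₂ ∧ o.a₃ = a₃ ∧ o.a₄ = a₄ ∧ o.x₄ = x₄ := by
  -- The moment equations determine the differences of the `x`'s up to a factor `k`, as Vandermonde
  -- minors of the `a`'s.
  let V (r s t : F) : F := (r - s) * (s - t) * (t - r)
  have hV {r s t : F} (hrs : r ≠ s) (hst : s ≠ t) (htr : t ≠ r) : V r s t ≠ 0 :=
    mul_ne_zero (mul_ne_zero (sub_ne_zero.2 hrs) (sub_ne_zero.2 hst)) (sub_ne_zero.2 htr)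
  have hV₁ : V a₂ a₃ a₄ ≠ 0 := hV h₂₃ h₃₄ h₂₄.symm
  obtain ⟨k, hk, hx₄⟩ : ∃ k, k ≠ 0 ∧ x₄ - x₁ = k * V a₂ a₃ a₄ :=
    ⟨(x₄ - x₁) / V a₂ a₃ a₄, div_ne_zero (sub_ne_zero.2 hx) hV₁, (div_mul_cancel₀ _ hV₁).symm⟩
  have hx₁₂ : x₁ - (x₁ + k * V a₁ a₃ a₄) = -(k * V a₁ a₃ a₄) := by ring
  have hx₂₃ : (x₁ + k * V a₁ a₃ a₄) - (x₄ - k * V a₁ a₂ a₃) = k * V a₁ a₂ a₄ := by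
    simp only [V] at hx₄ ⊢
    linear_combination -hx₄
  have hx₃₄ : (x₄ - k * V a₁ a₂ a₃) - x₄ = -(k * V a₁ a₂ a₃) := by ring
  refine ⟨⟨a₂, a₃, a₄, x₁ + k * V a₁ a₃ a₄, x₄ - k * V a₁ a₂ a₃, x₄, ?_, ?_, ?_, h₂₃, h₃₄, h₄,
    ?_, ?_⟩, rfl, rfl, rfl, rfl⟩
  · simp [hk, hV h₃.symm h₃₄ h₄]
  · rw [← sub_ne_zero, hx₂₃]
    exact mul_ne_zero hk (hV h₂.symm h₂₄ h₄)
  · simp [hk, hV h₂.symm h₂₃ h₃]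
  · rw [hx₁₂, hx₂₃, hx₃₄, hx₄]
    ring
  · rw [hx₁₂, hx₂₃, hx₃₄, hx₄]
    ring

/-- An octagon with `a₃ ≠ a₁` is given by a free choice of `x₄ ≠ x₁` and of distinct `a₂`, `a₃`,
`a₄` other than `a₁`. -/
noncomputable def nodesEquiv (a₁ x₁ : F) :
    {o : Octagon a₁ x₁ // o.a₃ ≠ a₁} ≃ {x // x ≠ x₁} × (Fin 3 ↪ {a // a ≠ a₁}) :=
  .ofBijective (fun o ↦ (⟨o.1.x₄, o.1.x₄_ne_x₁⟩, o.1.nodes o.2)) (by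
    constructor
    · intro o o' h
      obtain ⟨hx, h₂, h₃, h₄⟩ : o.1.x₄ = o'.1.x₄ ∧ _ := by simpa [nodes_inj] using h
      exact Subtype.ext (ext_of_a₃_ne_a₁ o.2 h₂ h₃ h₄ hx)
    · intro ⟨⟨x₄, hx⟩, e⟩
      have hne {i j : Fin 3} (hij : i ≠ j) : (e i : F) ≠ e j :=
        Subtype.coe_injective.ne (e.injective.ne hij)
      obtain ⟨o, h₂, h₃, h₄, rfl⟩ := exists_of_pairwise_ne (e 0).2 (e 1).2 (e 2).2
        (hne (by decide)) (hne (by decide)) (hne (by decide)) hx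
      refine ⟨⟨o, h₃.trans_ne (e 1).2⟩, Prod.ext rfl ?_⟩
      ext i
      fin_cases i <;> assumption)

lemma card [Finite F] (a₁ x₁ : F) :
    Nat.card (Octagon a₁ x₁) = (Nat.card F - 1) ^ 2 * ((Nat.card F - 2) ^ 2 + 1) := by
  classical
  have := Fintype.ofFinite F
  have hne (a : F) : Fintype.card {b // b ≠ a} = Fintype.card F - 1 := Set.card_ne_eq a
  obtain ⟨n, hn⟩ : ∃ n, Fintype.card F = n + 2 :=
    Nat.exists_eq_add_of_le' (Fintype.one_lt_card (α := F))
  calc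
    _ = Nat.card (({a // a ≠ a₁} × {x // x ≠ x₁} × {x // x ≠ x₁}) ⊕
        ({x // x ≠ x₁} × (Fin 3 ↪ {a // a ≠ a₁}))) :=
      Nat.card_congr ((Equiv.sumCompl _).symm.trans
        ((parallelogramEquiv a₁ x₁).sumCongr (nodesEquiv a₁ x₁)))
    _ = (n + 1) * ((n + 1) * (n + 1)) + (n + 1) * (n + 1).descFactorial 3 := by
      simp only [Nat.card_eq_fintype_card, Fintype.card_sum, Fintype.card_prod,
        Fintype.card_embedding_eq, Fintype.card_fin, hne, hn, Nat.add_one_sub_one]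
    _ = (Nat.card F - 1) ^ 2 * ((Nat.card F - 2) ^ 2 + 1) := by
      rw [Nat.card_eq_fintype_card, hn]
      rcases n with _ | n
      · rfl
      · simp only [Nat.descFactorial_succ, Nat.descFactorial_zero, Nat.add_sub_cancel,
          Nat.reduceSubDiff]
        ring

end Field

end Octagon

/-! ### Counting paths and cycles -/

/-- The coordinates of the path of length 7 along an octagon, from the line of `x₁` to the point
of `a₁`. -/
def Octagon.coordList {a₁ x₁ : R} (o : Octagon a₁ x₁) : List R :=
  [o.a₂, o.x₂, o.a₃, o.x₃, o.a₄, o.x₄, a₁]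

lemma Octagon.coordList_injective (a₁ x₁ : R) :
    Function.Injective (coordList : Octagon a₁ x₁ → List R) := fun o o' h ↦ by
  simp only [coordList, List.cons.injEq] at h
  ext <;> tauto

lemma mem_range_coordList_iff {a₁ b c x₁ y z : R}
    (h : (graph R).Adj (.inr (x₁, y, z)) (.inl (a₁, b, c))) (t : List R) :
    t ∈ Set.range (Octagon.coordList : Octagon a₁ x₁ → List R) ↔
      t.foldl step (.inr (x₁, y, z)) = .inl (a₁, b, c) ∧
        (ofCoords (.inr (x₁, y, z)) t).edges.IsChain (· ≠ ·) ∧ t.length = 7 := by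
  obtain ⟨hb, hc⟩ : b + y = a₁ * x₁ ∧ c + z = a₁ ^ 2 * x₁ := h
  constructor
  · rintro ⟨o, rfl⟩
    refine ⟨?_, ?_, rfl⟩
    · simp only [Octagon.coordList, List.foldl, step, Sum.inl.injEq, Prod.mk.injEq, true_and]
      constructor
      · linear_combination -hb + o.moment_one
      · linear_combination -hc + o.moment_two
    · simp only [Octagon.coordList, isChain_edges_ofCoords_cons_cons, coord_step]
      exact ⟨o.x₁_ne_x₂.symm, o.a₂_ne_a₃.symm, o.x₂_ne_x₃.symm, o.a₃_ne_a₄.symm, o.x₃_ne_x₄.symm,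
        o.a₄_ne_a₁.symm, isChain_edges_ofCoords_singleton ..⟩
  · rintro ⟨ht, hchain, hlen⟩
    match t, ht, hchain, hlen with
    | [a₂, x₂, a₃, x₃, a₄, x₄, a], ht, hchain, _ =>
      simp only [isChain_edges_ofCoords_cons_cons, coord_step] at hchain
      obtain ⟨hx₂, ha₃, hx₃, ha₄, hx₄, ha₁, -⟩ := hchain
      simp only [List.foldl, step, Sum.inl.injEq, Prod.mk.injEq] at ht
      obtain ⟨rfl, hb', hc'⟩ := ht
      exact ⟨⟨a₂, a₃, a₄, x₂, x₃, x₄, hx₂.symm, hx₃.symm, hx₄.symm, ha₃.symm, ha₄.symm, ha₁.symm,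
        by linear_combination hb + hb', by linear_combination hc + hc'⟩, rfl⟩

lemma card_isPath_seven_line_point [IsDomain R] {P l : R × R × R}
    (h : (graph R).Adj (.inr l) (.inl P)) :
    Nat.card {p : (graph R).Walk (.inr l) (.inl P) // p.IsPath ∧ p.length = 7} =
      Nat.card (Octagon P.1 l.1) := by
  have hlt {p : (graph R).Walk (.inr l) (.inl P)} (hp : p.length = 7) :
      p.length < (graph R).egirth := by
    rw [hp]
    exact lt_of_lt_of_le (by norm_num) eight_le_egirth
  calc
    _ = Nat.card {t : {t : List R // t.foldl step (.inr l) = .inl P} //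
          (ofCoords (.inr l) t.1).edges.IsChain (· ≠ ·) ∧ t.1.length = 7} := by
      refine Nat.card_congr ((walkEquiv (.inr l) (.inl P)).subtypeEquiv fun t ↦ ?_).symm
      rw [← edges_walkEquiv, ← length_walkEquiv]
      exact and_congr_left fun hp ↦ (isPath_iff_isChain_edges (hlt hp)).symm
    _ = Nat.card (Set.range (Octagon.coordList : Octagon P.1 l.1 → List R)) :=
      Nat.card_congr ((Equiv.subtypeSubtypeEquivSubtypeInter ..).trans
        (Equiv.subtypeEquivRight fun t ↦ (mem_range_coordList_iff h t).symm))
    _ = Nat.card (Octagon P.1 l.1) := Nat.card_range_of_injective (Octagon.coordList_injective ..)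

variable {F : Type*} [Field F]

lemma card_isPath_seven [Finite F] {u v : Vertex F} (h : (graph F).Adj u v) :
    Nat.card {p : (graph F).Walk v u // p.IsPath ∧ p.length = 7} =
      (Nat.card F - 1) ^ 2 * ((Nat.card F - 2) ^ 2 + 1) := by
  rcases u with P | l <;> rcases v with P' | l'
  · exact h.elim
  · rw [card_isPath_seven_line_point h.symm, Octagon.card]
  · rw [card_isPath_comm, card_isPath_seven_line_point h, Octagon.card]
  · exact h.elim

theorem isEGR_graph [Finite F] :
    (graph F).IsEGR (2 * Nat.card F ^ 3) (Nat.card F) 8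
      ((Nat.card F - 1) ^ 2 * ((Nat.card F - 2) ^ 2 + 1)) := by
  have hcycle {u v} (h : (graph F).Adj u v) :
      Nat.card {c : (graph F).Walk u u // c.IsCycle ∧ c.length = 8 ∧ s(u, v) ∈ c.edges} =
        2 * ((Nat.card F - 1) ^ 2 * ((Nat.card F - 2) ^ 2 + 1)) := by
    rw [card_isCycle_mem_edges h (by norm_num), card_isPath_seven h]
  refine ⟨inferInstance, card_vertex F, ncard_neighborSet, le_antisymm ?_ eight_le_egirth,
    fun u v ↦ hcycle⟩
  have hpos : 0 < Nat.card F - 1 := Nat.sub_pos_of_lt Finite.one_lt_card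
  have hcard := hcycle (adj_step (.inl (0 : F × F × F)) 0)
  obtain ⟨⟨c, hc, hlen, -⟩⟩ := (Nat.card_ne_zero.1 (hcard.trans_ne (by positivity))).1
  exact (egirth_le_length hc).trans_eq (by rw [hlen])

end AffineQuadrangle

/-- For every prime power `q ≥ 3` there exists a bipartite
`egr(2q³, q, 8, (q-1)²((q-2)²+1))` graph, arising from a generalized quadrangle
of order `(q, q)`. -/
theorem gq_bipartite_egr (q : ℕ) (hq : IsPrimePow q) (hq3 : 3 ≤ q) :
    ∃ (V : Type) (G : SimpleGraph V), G.Colorable 2 ∧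
      G.IsEGR (2 * q ^ 3) q 8 ((q - 1) ^ 2 * ((q - 2) ^ 2 + 1)) := by
  obtain ⟨p, n, hp, hn, rfl⟩ := (isPrimePow_nat_iff q).1 hq
  have : Fact p.Prime := ⟨hp⟩
  have hcard : Nat.card (GaloisField p n) = p ^ n := GaloisField.card p n hn.ne'
  have : Finite (GaloisField p n) := Nat.finite_of_card_ne_zero (hcard.trans_ne (by positivity))
  refine ⟨_, AffineQuadrangle.graph (GaloisField p n), AffineQuadrangle.colorable_two, ?_⟩
  rw [← hcard]
  exact AffineQuadrangle.isEGR_graph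
end

section
/- Let k ≥ 3 and let G be an egr(n,k,4,λ) graph. Then n·(λ+k−1) ≥ k³−2k²+2k−1+λ. -/
/-!
Fix a vertex `u` and let `c v` be the number of common neighbours of `u` and `v`. Both moments of
`c` over `v ≠ u` are sums over the neighbours `x` of `u`: paths `u, x, v` give
`∑ c v = ∑ₓ (deg x - 1)`, while `∑ (c v)²` counts triples `x, v, y` with `x` and `y` common
neighbours of `u` and `v`. For fixed `x` there are `deg x - 1` of these with `y = x`, and those with
`y ≠ x` are the 4-cycles `u, x, v, y` through the edge `ux`, at most `λ` of them. Cauchy–Schwarz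
over the `n - 1` vertices `v ≠ u` yields `(k (k - 1))² ≤ (n - 1) k (k - 1 + λ)`.
-/

open SimpleGraph

section

open Finset

variable {V : Type*} [DecidableEq V] (G : SimpleGraph V) [G.LocallyFinite] {u x : V}

/-- The 4-cycles through the edge `ux`, encoded by their other two vertices `⟨v, y⟩` in the cyclic
order `u, x, v, y`; since `u` and `x` are ordered, each cycle occurs once. -/
def squareCompletions (u x : V) : Finset (Σ _ : V, V) :=
  ((G.neighborFinset x).erase u).sigma fun v =>
    (G.neighborFinset u ∩ G.neighborFinset v).erase x

variable {G}

lemma mem_squareCompletions {q : Σ _ : V, V} :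
    q ∈ squareCompletions G u x ↔
      (q.1 ≠ u ∧ G.Adj x q.1) ∧ q.2 ≠ x ∧ G.Adj u q.2 ∧ G.Adj q.1 q.2 := by
  simp only [squareCompletions, mem_sigma, mem_erase, mem_inter, mem_neighborFinset]

/-- The closed walk `u, x, v, y, u` around the 4-cycle encoded by `q = ⟨v, y⟩`. -/
def squareWalk (hux : G.Adj u x) (q : squareCompletions G u x) : G.Walk u u :=
  have hq := mem_squareCompletions.mp q.2
  .cons hux <| .cons hq.1.2 <| .cons hq.2.2.2 <| .cons hq.2.2.1.symm .nil

lemma squareWalk_isCycle (hux : G.Adj u x) (q : squareCompletions G u x) :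
    (squareWalk hux q).IsCycle := by
  obtain ⟨⟨hvu, hxv⟩, hyx, huy, hvy⟩ := mem_squareCompletions.mp q.2
  refine (Walk.cons_isCycle_iff _ _).mpr ⟨(Walk.isPath_def _).mpr ?_, ?_⟩
  · simp [hxv.ne, hyx.symm, hux.ne', hvy.ne, hvu, huy.ne']
  · simp [hvu.symm, hyx.symm, hux.ne, huy.ne]

lemma support_squareWalk (hux : G.Adj u x) (q : squareCompletions G u x) :
    (squareWalk hux q).support = [u, x, q.1.1, q.1.2, u] :=
  rfl

lemma squareWalk_injective (hux : G.Adj u x) : Function.Injective (squareWalk hux) := by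
  intro q q' h
  have hsupp := congrArg Walk.support h
  simp only [support_squareWalk, List.cons.injEq, and_true, true_and] at hsupp
  exact Subtype.ext (Sigma.ext hsupp.1 (heq_of_eq hsupp.2))

lemma squareWalk_ne_reverse (hux : G.Adj u x) (q q' : squareCompletions G u x) :
    squareWalk hux q ≠ (squareWalk hux q').reverse := by
  intro h
  have hsupp := congrArg Walk.support h
  simp only [Walk.support_reverse, support_squareWalk, List.reverse_cons, List.reverse_nil,
    List.nil_append, List.cons_append, List.cons.injEq, true_and] at hsupp
  exact (mem_squareCompletions.mp q'.2).2.1 hsupp.1.symm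

lemma two_mul_card_squareCompletions_le (hux : G.Adj u x) :
    2 * #(squareCompletions G u x) ≤
      Nat.card {p : G.Walk u u // p.IsCycle ∧ p.length = 4 ∧ s(u, x) ∈ p.edges} := by
  let C := {p : G.Walk u u | p.IsCycle ∧ p.length = 4 ∧ s(u, x) ∈ p.edges}
  have : Finite C :=
    (Set.toFinite {p : G.Walk u u | p.length = 4}).subset fun _ hp => hp.2.1
  have forward_mem (q) : squareWalk hux q ∈ C :=
    ⟨squareWalk_isCycle hux q, rfl, by simp [squareWalk]⟩
  have backward_mem (q) : (squareWalk hux q).reverse ∈ C := by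
    simpa [C] using forward_mem q
  let orient : squareCompletions G u x ⊕ squareCompletions G u x → C :=
    Sum.elim (fun q => ⟨_, forward_mem q⟩) fun q => ⟨_, backward_mem q⟩
  have orient_injective : Function.Injective orient :=
    Function.Injective.sumElim
      (fun _ _ h => squareWalk_injective hux (congrArg Subtype.val h))
      (fun _ _ h => squareWalk_injective hux (Walk.reverse_injective (congrArg Subtype.val h)))
      fun q q' h => squareWalk_ne_reverse hux q q' (congrArg Subtype.val h)
  calc 2 * #(squareCompletions G u x)
      = Nat.card (squareCompletions G u x ⊕ squareCompletions G u x) := by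
        rw [Nat.card_sum, Nat.card_eq_finsetCard, two_mul]
    _ ≤ Nat.card C := Nat.card_le_card_of_injective orient orient_injective

lemma sum_card_inter_neighborFinset (hux : G.Adj u x) :
    ∑ v ∈ (G.neighborFinset x).erase u, #(G.neighborFinset u ∩ G.neighborFinset v) =
      G.degree x - 1 + #(squareCompletions G u x) := by
  have hx_common : ∀ v ∈ (G.neighborFinset x).erase u,
      #(G.neighborFinset u ∩ G.neighborFinset v) =
        1 + #((G.neighborFinset u ∩ G.neighborFinset v).erase x) := by
    intro v hv
    have hxv : G.Adj x v := (G.mem_neighborFinset x v).mp (mem_of_mem_erase hv)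
    have hx : x ∈ G.neighborFinset u ∩ G.neighborFinset v := by simp [hux, hxv.symm]
    rw [add_comm, card_erase_add_one hx]
  rw [sum_congr rfl hx_common, sum_add_distrib, ← card_eq_sum_ones,
    card_erase_of_mem (by simpa using hux.symm), card_neighborFinset_eq_degree,
    squareCompletions, card_sigma]

variable [Fintype V]

lemma sum_card_inter_neighborFinset_mul (G : SimpleGraph V) [G.LocallyFinite] {R : Type*}
    [NonAssocSemiring R] (u : V) (f : V → R) :
    ∑ v ∈ univ.erase u, #(G.neighborFinset u ∩ G.neighborFinset v) * f v =
      ∑ x ∈ G.neighborFinset u, ∑ v ∈ (G.neighborFinset x).erase u, f v := by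
  simp only [← nsmul_eq_mul, ← sum_const]
  refine sum_comm' fun v x => ?_
  simp only [mem_erase, mem_univ, mem_inter, mem_neighborFinset, G.adj_comm v x]
  tauto

lemma sq_sum_degree_sub_one_le (G : SimpleGraph V) [G.LocallyFinite] (u : V) :
    (∑ x ∈ G.neighborFinset u, (G.degree x - 1)) ^ 2 ≤
      (Fintype.card V - 1) *
        ∑ x ∈ G.neighborFinset u, (G.degree x - 1 + #(squareCompletions G u x)) := by
  let c (v : V) : ℕ := #(G.neighborFinset u ∩ G.neighborFinset v)
  have first_moment :
      ∑ v ∈ univ.erase u, c v = ∑ x ∈ G.neighborFinset u, (G.degree x - 1) := by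
    have h := sum_card_inter_neighborFinset_mul G u (1 : V → ℕ)
    simp only [Nat.cast_id, Pi.one_apply, mul_one, ← card_eq_sum_ones] at h
    refine h.trans (sum_congr rfl fun x hx => ?_)
    have hux : G.Adj u x := (G.mem_neighborFinset u x).mp hx
    rw [card_erase_of_mem (by simpa using hux.symm), card_neighborFinset_eq_degree]
  have second_moment : ∑ v ∈ univ.erase u, c v ^ 2 =
      ∑ x ∈ G.neighborFinset u, (G.degree x - 1 + #(squareCompletions G u x)) := by
    simp only [sq]
    refine (sum_card_inter_neighborFinset_mul G u c).trans (sum_congr rfl fun x hx => ?_)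
    exact sum_card_inter_neighborFinset ((G.mem_neighborFinset u x).mp hx)
  rw [← first_moment, ← second_moment, ← card_univ, ← card_erase_of_mem (mem_univ u)]
  exact sq_sum_le_card_mul_sum_sq

lemma degree_mul_sub_one_sq_le {k lam : ℕ} (hnbr : ∀ x, G.Adj u x → G.degree x = k)
    (hsq : ∀ x, G.Adj u x → #(squareCompletions G u x) ≤ lam) :
    G.degree u * (k - 1) ^ 2 ≤ (Fintype.card V - 1) * (k - 1 + lam) := by
  have hsum : ∑ x ∈ G.neighborFinset u, (G.degree x - 1) = G.degree u * (k - 1) := by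
    rw [← card_neighborFinset_eq_degree, ← smul_eq_mul]
    refine sum_eq_card_nsmul fun x hx => ?_
    rw [hnbr x ((G.mem_neighborFinset u x).mp hx)]
  have hsum_sq : ∑ x ∈ G.neighborFinset u, (G.degree x - 1 + #(squareCompletions G u x)) ≤
      G.degree u * (k - 1 + lam) := by
    rw [← card_neighborFinset_eq_degree, ← smul_eq_mul]
    refine sum_le_card_nsmul _ _ _ fun x hx => ?_
    have hux : G.Adj u x := (G.mem_neighborFinset u x).mp hx
    rw [hnbr x hux]
    exact Nat.add_le_add_left (hsq x hux) _
  obtain hdeg | hdeg := (G.degree u).eq_zero_or_pos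
  · simp [hdeg]
  · refine Nat.le_of_mul_le_mul_left ?_ hdeg
    calc G.degree u * (G.degree u * (k - 1) ^ 2)
        = (∑ x ∈ G.neighborFinset u, (G.degree x - 1)) ^ 2 := by rw [hsum]; ring
      _ ≤ (Fintype.card V - 1) *
            ∑ x ∈ G.neighborFinset u, (G.degree x - 1 + #(squareCompletions G u x)) :=
          sq_sum_degree_sub_one_le G u
      _ ≤ (Fintype.card V - 1) * (G.degree u * (k - 1 + lam)) := Nat.mul_le_mul_left _ hsum_sq
      _ = G.degree u * ((Fintype.card V - 1) * (k - 1 + lam)) := by ring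

end

lemma ncard_neighborSet_eq_degree {V : Type*} (G : SimpleGraph V) (v : V)
    [Fintype (G.neighborSet v)] : (G.neighborSet v).ncard = G.degree v := by
  rw [← card_neighborFinset_eq_degree, ← Set.ncard_coe_finset, coe_neighborFinset]

lemma nonempty_of_egirth_ne_top {V : Type*} {G : SimpleGraph V} (h : G.egirth ≠ ⊤) :
    Nonempty V := by
  by_contra hV
  rw [not_nonempty_iff] at hV
  exact h IsAcyclic.of_subsingleton.egirth_eq_top

theorem egr_girth4_lower_bound_general {V : Type*} [Finite V] {G : SimpleGraph V} {u : V}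
    {k lam : ℕ} (hk : 0 < k) (hu : (G.neighborSet u).ncard = k)
    (hnbr : ∀ x, G.Adj u x → (G.neighborSet x).ncard = k)
    (hcount : ∀ x, G.Adj u x →
      Nat.card {p : G.Walk u u // p.IsCycle ∧ p.length = 4 ∧ s(u, x) ∈ p.edges} ≤ 2 * lam) :
    (Nat.card V : ℤ) * (lam + k - 1) ≥ (k : ℤ) ^ 3 - 2 * k ^ 2 + 2 * k - 1 + lam := by
  classical
  have := Fintype.ofFinite V
  simp only [ncard_neighborSet_eq_degree] at hu hnbr
  have hsq (x) (hux : G.Adj u x) : (squareCompletions G u x).card ≤ lam :=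
    Nat.le_of_mul_le_mul_left
      ((two_mul_card_squareCompletions_le hux).trans (hcount x hux)) two_pos
  have hbound := degree_mul_sub_one_sq_le hnbr hsq
  have hcard : 0 < Fintype.card V := Fintype.card_pos_iff.mpr ⟨u⟩
  rw [hu] at hbound
  zify [Nat.one_le_iff_ne_zero.mpr hk.ne', Nat.one_le_iff_ne_zero.mpr hcard.ne'] at hbound
  rw [Nat.card_eq_fintype_card]
  linarith

/-- Eigenvalue lower bound for edge-girth-regular graphs of girth 4:
if `G` is an `egr(n, k, 4, λ)` graph with `k ≥ 3`, then
`n(λ + k - 1) ≥ k³ - 2k² + 2k - 1 + λ`. -/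
theorem egr_girth4_lower_bound (n k lam : ℕ) (hk : 3 ≤ k) {V : Type*}
    (G : SimpleGraph V) (h : G.IsEGR n k 4 lam) :
    (n : ℤ) * (lam + k - 1) ≥ (k : ℤ) ^ 3 - 2 * k ^ 2 + 2 * k - 1 + lam := by
  obtain ⟨_, rfl, hreg, hgirth, hcount⟩ := h
  obtain ⟨u⟩ := nonempty_of_egirth_ne_top (hgirth.trans_ne (ENat.natCast_ne_top 4))
  exact egr_girth4_lower_bound_general (by omega) (hreg u) (fun x _ => hreg x)
    fun x hux => (hcount u x hux).le
end
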